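/- arXiv:1706.02620 — 2 statements merged into one kernel-verified Lean document; each statement's English description precedes it below -/
import Mathlib

section
/- Let w ∈ A_∞, i.e. w ∈ A_p for some 1 ≤ p < ∞. Then there exists s > 1, depending only on n, p and [w]_{A_p}, such that w satisfies the reverse Hölder inequality with constant 2: for every cube Q, (⨍_Q w^s dx)^{1/s} ≤ 2 ⨍_Q w dx. In particular w ∈ RH_s. -/
open MeasureTheory ENNReal
open scoped Classical

noncomputable section

variable {n : ℕ}

/-- An axis-parallel half-open cube in `ℝⁿ`. -/
def IsCube (Q : Set (Fin n → ℝ)) : Prop :=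
  ∃ (a : Fin n → ℝ) (l : ℝ), 0 < l ∧ Q = {x | ∀ i, a i ≤ x i ∧ x i < a i + l}

/-- The average `⨍_Q f` of an `ℝ≥0∞`-valued function over a set, w.r.t. Lebesgue measure. -/
def eavg (Q : Set (Fin n → ℝ)) (f : (Fin n → ℝ) → ℝ≥0∞) : ℝ≥0∞ :=
  (∫⁻ x in Q, f x) / volume Q

/-- A weight: measurable, a.e. positive and finite, and locally integrable. -/
def IsWeight (w : (Fin n → ℝ) → ℝ≥0∞) : Prop :=
  Measurable w ∧ (∀ᵐ x ∂(volume : Measure (Fin n → ℝ)), 0 < w x ∧ w x < ∞) ∧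
    ∀ Q : Set (Fin n → ℝ), IsCube Q → ∫⁻ x in Q, w x < ∞

/-- The Muckenhoupt `A_p` constant, `1 ≤ p < ∞` (ess-sup form when `p = 1`). -/
def ApConst (p : ℝ) (w : (Fin n → ℝ) → ℝ≥0∞) : ℝ≥0∞ :=
  if p = 1 then
    ⨆ (Q : Set (Fin n → ℝ)) (_ : IsCube Q),
      essSup (fun x => eavg Q w / w x) (volume.restrict Q)
  else
    ⨆ (Q : Set (Fin n → ℝ)) (_ : IsCube Q),
      eavg Q w * (eavg Q fun x => w x ^ (1 - p / (p - 1))) ^ (p - 1)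

/-- Membership in the Muckenhoupt class `A_p`. -/
def MemAp (p : ℝ) (w : (Fin n → ℝ) → ℝ≥0∞) : Prop := ApConst p w < ∞

/-- The reverse Hölder `RH_s` constant. -/
def RHConst (s : ℝ) (w : (Fin n → ℝ) → ℝ≥0∞) : ℝ≥0∞ :=
  ⨆ (Q : Set (Fin n → ℝ)) (_ : IsCube Q),
    (eavg Q fun x => w x ^ s) ^ (1 / s) / eavg Q w

/-- Membership in the reverse Hölder class `RH_s`. -/
def MemRH (s : ℝ) (w : (Fin n → ℝ) → ℝ≥0∞) : Prop := RHConst s w < ∞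

/-- The `RH_∞` constant. -/
def RHInfConst (w : (Fin n → ℝ) → ℝ≥0∞) : ℝ≥0∞ :=
  ⨆ (Q : Set (Fin n → ℝ)) (_ : IsCube Q),
    essSup (fun x => w x / eavg Q w) (volume.restrict Q)

/-- Membership in `RH_∞`. -/
def MemRHInf (w : (Fin n → ℝ) → ℝ≥0∞) : Prop := RHInfConst w < ∞

/-- The Hardy–Littlewood maximal operator (over all cubes containing `x`). -/
def maximal (f : (Fin n → ℝ) → ℝ) (x : Fin n → ℝ) : ℝ≥0∞ :=
  ⨆ (Q : Set (Fin n → ℝ)) (_ : IsCube Q) (_ : x ∈ Q),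
    eavg Q fun y => ENNReal.ofReal |f y|

/-- The Hardy–Littlewood maximal operator acting on `ℝ≥0∞`-valued functions. -/
def emaximal (f : (Fin n → ℝ) → ℝ≥0∞) (x : Fin n → ℝ) : ℝ≥0∞ :=
  ⨆ (Q : Set (Fin n → ℝ)) (_ : IsCube Q) (_ : x ∈ Q), eavg Q f

/-- The norm `‖f‖_{L^p(w)} = (∫ f^p w dx)^(1/p)`. -/
def wLpNorm (p : ℝ) (w f : (Fin n → ℝ) → ℝ≥0∞) : ℝ≥0∞ :=
  (∫⁻ x, f x ^ p * w x) ^ (1 / p)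

/-!
By Hölder's inequality, the `A_p` condition forces a subset of a cube carrying at most half of its
volume to carry at most the fraction `β = 1 - (2 ^ p * K)⁻¹ < 1` of its `w`-mass. Fix a cube `Q`,
bisect it dyadically, and consider the set where the dyadic maximal function of `w` exceeds `t`.
It is a disjoint union of stopping cubes on which the average of `w` is at most `2 ^ n * t`, so
inside each of them the set where the maximal function exceeds `2 * 2 ^ n * t` fills at most half
of the volume and hence carries at most the fraction `β` of the mass. Starting from
`t = ⨍_Q w`, the `w`-mass of the superlevel sets decays like `β ^ k` at the heights
`(2 * 2 ^ n) ^ k * ⨍_Q w`. Since `w` is dominated almost everywhere by its maximal function,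
summing over the layers gives
`∫_Q w ^ (1 + δ) ≤ (1 + o(1)) * (⨍_Q w) ^ δ * ∫_Q w` as `δ → 0`, uniformly in `w` and `Q`.
-/

/-- A sequence of countable measurable partitions of `X`, each refining the previous one: `cell j x`
is the member of the `j`-th partition containing `x`. It abstracts the dyadic grid. -/
structure NestedPartition (X : Type*) [MeasurableSpace X] where
  cell : ℕ → X → Set X
  mem_cell (j : ℕ) (x : X) : x ∈ cell j x
  cell_eq_of_mem {j : ℕ} {x y : X} : y ∈ cell j x → cell j y = cell j x
  cell_succ_subset (j : ℕ) (x : X) : cell (j + 1) x ⊆ cell j x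
  measurableSet_cell (j : ℕ) (x : X) : MeasurableSet (cell j x)
  countable_range_cell (j : ℕ) : (Set.range (cell j)).Countable

namespace NestedPartition

variable {X : Type*} [MeasurableSpace X] (P : NestedPartition X) {μ ν : Measure X}
  {i j : ℕ} {x y : X} {S : Set X} {t : ℝ≥0∞}

lemma cell_antitone (x : X) : Antitone (P.cell · x) :=
  antitone_nat_of_succ_le fun j => P.cell_succ_subset j x

lemma cell_eq_of_mem_of_le (hij : i ≤ j) (hy : y ∈ P.cell j x) : P.cell i y = P.cell i x :=
  P.cell_eq_of_mem (P.cell_antitone x hij hy)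

lemma cell_subset_or_disjoint (hij : i ≤ j) (x y : X) :
    P.cell j x ⊆ P.cell i y ∨ Disjoint (P.cell j x) (P.cell i y) := by
  refine or_iff_not_imp_right.2 fun h => ?_
  obtain ⟨z, hzx, hzy⟩ := Set.not_disjoint_iff.1 h
  rw [← P.cell_eq_of_mem hzx, ← P.cell_eq_of_mem hzy]
  exact P.cell_antitone z hij

lemma restrict_cell_apply_cell_le (h : ν (P.cell j y) ≤ t * μ (P.cell j y)) (x : X) :
    ν.restrict (P.cell j y) (P.cell j x) ≤ t * μ (P.cell j x) := by
  rcases P.cell_subset_or_disjoint le_rfl x y with hsub | hdisj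
  · rwa [P.cell_eq_of_mem (hsub (P.mem_cell j x)), Measure.restrict_apply_self]
  · rw [Measure.restrict_apply (P.measurableSet_cell j x), hdisj.inter_eq, measure_empty]
    exact zero_le

lemma sUnion_image_cell (hS : ∀ x ∈ S, P.cell j x ⊆ S) : ⋃₀ (P.cell j '' S) = S := by
  refine (Set.sUnion_subset ?_).antisymm fun x hx => ⟨_, ⟨x, hx, rfl⟩, P.mem_cell j x⟩
  rintro _ ⟨x, hx, rfl⟩
  exact hS x hx

lemma countable_image_cell (j : ℕ) (S : Set X) : (P.cell j '' S).Countable :=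
  (P.countable_range_cell j).mono (Set.image_subset_range _ _)

lemma measurableSet_of_cell_subset (hS : ∀ x ∈ S, P.cell j x ⊆ S) : MeasurableSet S := by
  rw [← P.sUnion_image_cell hS]
  refine .sUnion (P.countable_image_cell j S) ?_
  rintro _ ⟨x, -, rfl⟩
  exact P.measurableSet_cell j x

lemma measure_eq_tsum_cell (μ : Measure X) (hS : ∀ x ∈ S, P.cell j x ⊆ S) :
    μ S = ∑' C : P.cell j '' S, μ C := by
  conv_lhs => rw [← P.sUnion_image_cell hS]
  refine measure_sUnion (P.countable_image_cell j S) ?_ ?_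
  · rintro _ ⟨x, -, rfl⟩ _ ⟨y, -, rfl⟩ hne
    refine Set.disjoint_left.2 fun z hzx hzy => hne ?_
    rw [← P.cell_eq_of_mem hzx, ← P.cell_eq_of_mem hzy]
  · rintro _ ⟨x, -, rfl⟩
    exact P.measurableSet_cell j x

lemma measure_le_of_forall_cell (hS : ∀ x ∈ S, P.cell j x ⊆ S ∧ μ (P.cell j x) ≤ ν (P.cell j x)) :
    μ S ≤ ν S := by
  have hsub : ∀ x ∈ S, P.cell j x ⊆ S := fun x hx => (hS x hx).1
  rw [P.measure_eq_tsum_cell μ hsub, P.measure_eq_tsum_cell ν hsub]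
  refine ENNReal.tsum_le_tsum ?_
  rintro ⟨_, x, hx, rfl⟩
  exact (hS x hx).2

/-- The level `j` is allowed to vary from point to point: grouping the points of `S` by their first
admissible level selects pairwise disjoint cells, so no covering constant is lost. -/
lemma measure_le_of_forall_exists_cell
    (hS : ∀ x ∈ S, ∃ j, P.cell j x ⊆ S ∧ μ (P.cell j x) ≤ ν (P.cell j x)) : μ S ≤ ν S := by
  let G : ℕ → Set X := fun j => {x | P.cell j x ⊆ S ∧ μ (P.cell j x) ≤ ν (P.cell j x)}
  have hG : ∀ {i j x y}, i ≤ j → y ∈ P.cell j x → (y ∈ G i ↔ x ∈ G i) := fun hij hy => by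
    simp only [G, Set.mem_ofPred_eq, P.cell_eq_of_mem_of_le hij hy]
  have hcell : ∀ j, ∀ x ∈ disjointed G j, P.cell j x ⊆ disjointed G j := fun j x hx y hy => by
    simp only [disjointed_eq_inter_compl, Set.mem_inter_iff, Set.mem_iInter,
      Set.mem_compl_iff] at hx ⊢
    exact ⟨(hG le_rfl hy).2 hx.1, fun i hij => mt (hG hij.le hy).1 (hx.2 i hij)⟩
  have hmeas : ∀ j, MeasurableSet (disjointed G j) := fun j =>
    P.measurableSet_of_cell_subset (hcell j)
  have hunion : ⋃ j, disjointed G j = S := by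
    rw [iUnion_disjointed]
    exact (Set.iUnion_subset fun j x hx => hx.1 (P.mem_cell j x)).antisymm
      fun x hx => Set.mem_iUnion.2 (hS x hx)
  rw [← hunion, measure_iUnion (disjoint_disjointed G) hmeas,
    measure_iUnion (disjoint_disjointed G) hmeas]
  exact ENNReal.tsum_le_tsum fun j => P.measure_le_of_forall_cell fun x hx =>
    ⟨hcell j x hx, (disjointed_subset G j hx).2⟩

/-- The set where the maximal function of `dν/dμ` along the cells of `P` exceeds `t`. -/
def superlevel (μ ν : Measure X) (t : ℝ≥0∞) : Set X :=
  {x | ∃ j, t * μ (P.cell j x) < ν (P.cell j x)}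

lemma superlevel_antitone (μ ν : Measure X) : Antitone (P.superlevel μ ν) :=
  fun _ _ hst _ ⟨j, hj⟩ => ⟨j, hj.trans_le' (by gcongr)⟩

lemma cell_subset_superlevel (h : t * μ (P.cell j x) < ν (P.cell j x)) :
    P.cell j x ⊆ P.superlevel μ ν t :=
  fun y hy => ⟨j, by rwa [P.cell_eq_of_mem hy]⟩

lemma measurableSet_superlevel (μ ν : Measure X) (t : ℝ≥0∞) :
    MeasurableSet (P.superlevel μ ν t) := by
  have : P.superlevel μ ν t = ⋃ j, {x | t * μ (P.cell j x) < ν (P.cell j x)} := by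
    ext x
    simp only [superlevel, Set.mem_ofPred_eq, Set.mem_iUnion]
  rw [this]
  refine .iUnion fun j => P.measurableSet_of_cell_subset (j := j) fun x hx y hy => ?_
  rwa [Set.mem_ofPred_eq, P.cell_eq_of_mem hy]

lemma mul_measure_cell_inter_superlevel_le (h : ∀ i < j, ν (P.cell i x) ≤ t * μ (P.cell i x)) :
    t * μ (P.cell j x ∩ P.superlevel μ ν t) ≤ ν (P.cell j x) := by
  suffices (t • μ) (P.cell j x ∩ P.superlevel μ ν t) ≤ ν (P.cell j x ∩ P.superlevel μ ν t) from
    this.trans (measure_mono Set.inter_subset_left)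
  refine P.measure_le_of_forall_exists_cell ?_
  rintro z ⟨hzx, k, hk⟩
  have hjk : j ≤ k := by
    by_contra! hkj
    rw [P.cell_eq_of_mem_of_le hkj.le hzx] at hk
    exact hk.not_ge (h k hkj)
  refine ⟨k, Set.subset_inter ?_ (P.cell_subset_superlevel hk), hk.le⟩
  exact (P.cell_antitone z hjk).trans (P.cell_eq_of_mem hzx).subset

lemma exists_stopping_cell {D : ℝ≥0∞} (hD : ∀ j x, μ (P.cell j x) ≤ D * μ (P.cell (j + 1) x))
    (hroot : ν (P.cell 0 x) ≤ t * μ (P.cell 0 x)) (hx : x ∈ P.superlevel μ ν t) :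
    ∃ j, t * μ (P.cell j x) < ν (P.cell j x) ∧
      (∀ i < j, ν (P.cell i x) ≤ t * μ (P.cell i x)) ∧
      ν (P.cell j x) ≤ D * t * μ (P.cell j x) := by
  have hfirst : ∀ i < Nat.find hx, ν (P.cell i x) ≤ t * μ (P.cell i x) :=
    fun i hi => not_lt.1 (Nat.find_min hx hi)
  refine ⟨Nat.find hx, Nat.find_spec hx, hfirst, ?_⟩
  obtain ⟨k, hk⟩ : ∃ k, Nat.find hx = k + 1 := by
    refine Nat.exists_eq_succ_of_ne_zero fun h0 => ?_
    exact (h0 ▸ Nat.find_spec hx).not_ge hroot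
  rw [hk]
  calc ν (P.cell (k + 1) x) ≤ ν (P.cell k x) := measure_mono (P.cell_succ_subset k x)
    _ ≤ t * μ (P.cell k x) := hfirst k (by omega)
    _ ≤ t * (D * μ (P.cell (k + 1) x)) := by gcongr; exact hD k x
    _ = D * t * μ (P.cell (k + 1) x) := by ring

end NestedPartition

/-- The quantitative absolute continuity of `ν` with respect to `μ` on `C` that underlies `A_∞`:
a subset of at most half the `μ`-measure carries at most the fraction `β` of the `ν`-measure. -/
def HalfSubsetBound {X : Type*} [MeasurableSpace X] (μ ν : Measure X) (β : ℝ≥0∞) (C : Set X) :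
    Prop :=
  ∀ E ⊆ C, MeasurableSet E → 2 * μ E ≤ μ C → ν E ≤ β * ν C

lemma HalfSubsetBound.restrict {X : Type*} [MeasurableSpace X] {μ ν : Measure X} {β : ℝ≥0∞}
    {C Q : Set X} (hCQ : C ⊆ Q ∨ Disjoint C Q) (h : C ⊆ Q → HalfSubsetBound μ ν β C) :
    HalfSubsetBound μ (ν.restrict Q) β C := by
  intro E hEC hE hμE
  rcases hCQ with hCQ | hCQ
  · rw [Measure.restrict_eq_self _ (hEC.trans hCQ), Measure.restrict_eq_self _ hCQ]
    exact h hCQ E hEC hE hμE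
  · rw [Measure.restrict_apply hE, (hCQ.mono_left hEC).inter_eq, measure_empty]
    exact zero_le

namespace NestedPartition

variable {X : Type*} [MeasurableSpace X] (P : NestedPartition X) {μ ν : Measure X}
  {D β L t : ℝ≥0∞}

lemma measure_superlevel_mul_le (hD : ∀ j x, μ (P.cell j x) ≤ D * μ (P.cell (j + 1) x))
    (hD1 : 1 ≤ D) (hDtop : D ≠ ∞) (hβ : ∀ j x, HalfSubsetBound μ ν β (P.cell j x))
    (ht0 : t ≠ 0) (httop : t ≠ ∞) (hroot : ∀ x, ν (P.cell 0 x) ≤ t * μ (P.cell 0 x)) :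
    ν (P.superlevel μ ν (2 * D * t)) ≤ β * ν (P.superlevel μ ν t) := by
  set F := P.superlevel μ ν (2 * D * t)
  have hF : MeasurableSet F := P.measurableSet_superlevel μ ν _
  have hle : t ≤ 2 * D * t :=
    le_mul_of_one_le_left zero_le (one_le_mul_of_one_le_of_one_le one_le_two hD1)
  have hFsub : F ⊆ P.superlevel μ ν t := P.superlevel_antitone μ ν hle
  suffices (ν.restrict F) (P.superlevel μ ν t) ≤ (β • ν) (P.superlevel μ ν t) by
    rwa [Measure.restrict_apply' hF, Set.inter_eq_right.2 hFsub] at this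
  refine P.measure_le_of_forall_exists_cell fun x hx => ?_
  obtain ⟨j, hj, hfirst, hup⟩ := P.exists_stopping_cell hD (hroot x) hx
  refine ⟨j, P.cell_subset_superlevel hj, ?_⟩
  rw [Measure.restrict_apply' hF]
  refine hβ j x _ Set.inter_subset_left ((P.measurableSet_cell j x).inter hF) ?_
  have hfirst' : ∀ i < j, ν (P.cell i x) ≤ 2 * D * t * μ (P.cell i x) :=
    fun i hi => (hfirst i hi).trans (by gcongr)
  have hDt : D * t * (2 * μ (P.cell j x ∩ F)) ≤ D * t * μ (P.cell j x) :=
    calc D * t * (2 * μ (P.cell j x ∩ F)) = 2 * D * t * μ (P.cell j x ∩ F) := by ring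
      _ ≤ ν (P.cell j x) := P.mul_measure_cell_inter_superlevel_le hfirst'
      _ ≤ D * t * μ (P.cell j x) := hup
  have hD0 : D ≠ 0 := (zero_lt_one.trans_le hD1).ne'
  exact (ENNReal.mul_le_mul_iff_right (mul_ne_zero hD0 ht0) (by finiteness)).1 hDt

lemma measure_superlevel_pow_mul_le (hD : ∀ j x, μ (P.cell j x) ≤ D * μ (P.cell (j + 1) x))
    (hD1 : 1 ≤ D) (hDtop : D ≠ ∞) (hβ : ∀ j x, HalfSubsetBound μ ν β (P.cell j x))
    (hL0 : L ≠ 0) (hLtop : L ≠ ∞) (hroot : ∀ x, ν (P.cell 0 x) ≤ L * μ (P.cell 0 x)) (k : ℕ) :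
    ν (P.superlevel μ ν ((2 * D) ^ k * L)) ≤ β ^ k * ν Set.univ := by
  have hone : 1 ≤ 2 * D := one_le_mul_of_one_le_of_one_le one_le_two hD1
  induction k with
  | zero => simpa using measure_mono (Set.subset_univ _)
  | succ k ih =>
    have hpow : 1 ≤ (2 * D) ^ k := one_le_pow₀ hone
    have hstep := P.measure_superlevel_mul_le (t := (2 * D) ^ k * L) hD hD1 hDtop hβ
      (mul_ne_zero (zero_lt_one.trans_le hpow).ne' hL0) (by finiteness)
      fun x => (hroot x).trans (by gcongr; exact le_mul_of_one_le_left zero_le hpow)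
    calc ν (P.superlevel μ ν ((2 * D) ^ (k + 1) * L))
        = ν (P.superlevel μ ν (2 * D * ((2 * D) ^ k * L))) := by rw [pow_succ', mul_assoc]
      _ ≤ β * ν (P.superlevel μ ν ((2 * D) ^ k * L)) := hstep
      _ ≤ β * (β ^ k * ν Set.univ) := by gcongr
      _ = β ^ (k + 1) * ν Set.univ := by rw [pow_succ', mul_assoc]

end NestedPartition

lemma pow_eq_one_add_sum_sub_one_mul_pow {r : ℝ≥0∞} (hr : 1 ≤ r) (m : ℕ) :
    r ^ m = 1 + ∑ k ∈ Finset.range m, (r - 1) * r ^ k := by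
  induction m with
  | zero => simp
  | succ m ih =>
    rw [Finset.sum_range_succ, ← add_assoc, ← ih, ← one_add_mul, add_tsub_cancel_of_le hr,
      pow_succ']

section GeometricTail

variable {A L : ℝ≥0∞} {δ : ℝ}

/-- A discrete layer-cake formula. Splitting off the layer `s ≤ L`, instead of comparing `s` with
the next power of `A`, is what makes the constant tend to `1` as `δ → 0`. -/
lemma rpow_le_mul_one_add_tsum_indicator (hA : 1 < A) (hδ : 0 < δ) (hL : L ≠ 0) (s : ℝ≥0∞) :
    s ^ δ ≤ L ^ δ *
      (1 + ∑' k : ℕ, (Set.Ioi (A ^ k * L)).indicator (fun _ => (A ^ δ - 1) * (A ^ δ) ^ k) s) := by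
  have hr : 1 < A ^ δ := ENNReal.one_lt_rpow hA hδ
  by_cases h : ∃ m : ℕ, s ≤ A ^ m * L
  · have hbelow : ∀ k < Nat.find h, s ∈ Set.Ioi (A ^ k * L) :=
      fun k hk => not_le.1 (Nat.find_min h hk)
    calc s ^ δ ≤ (A ^ Nat.find h * L) ^ δ := by gcongr; exact Nat.find_spec h
      _ = L ^ δ * (A ^ δ) ^ Nat.find h := by
        rw [ENNReal.mul_rpow_of_nonneg _ _ hδ.le, mul_comm, ← ENNReal.rpow_natCast_mul,
          mul_comm _ δ, ENNReal.rpow_mul_natCast]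
      _ = L ^ δ * (1 + ∑ k ∈ Finset.range (Nat.find h),
          (Set.Ioi (A ^ k * L)).indicator (fun _ => (A ^ δ - 1) * (A ^ δ) ^ k) s) := by
        rw [pow_eq_one_add_sum_sub_one_mul_pow hr.le]
        congr 2
        refine Finset.sum_congr rfl fun k hk => ?_
        rw [Set.indicator_of_mem (hbelow k (Finset.mem_range.1 hk))]
      _ ≤ _ := by gcongr; exact ENNReal.sum_le_tsum _
  · have habove : ∀ k : ℕ, s ∈ Set.Ioi (A ^ k * L) := by simpa using h
    have htop : ∑' k : ℕ,
        (Set.Ioi (A ^ k * L)).indicator (fun _ => (A ^ δ - 1) * (A ^ δ) ^ k) s = ∞ := by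
      refine top_unique ?_
      rw [← ENNReal.tsum_const_eq_top_of_ne_zero (α := ℕ) (tsub_pos_of_lt hr).ne']
      refine ENNReal.tsum_le_tsum fun k => ?_
      rw [Set.indicator_of_mem (habove k)]
      exact le_mul_of_one_le_right zero_le (one_le_pow₀ hr.le)
    have hLδ : L ^ δ ≠ 0 := (ENNReal.rpow_pos_of_nonneg (pos_iff_ne_zero.2 hL) hδ.le).ne'
    rw [htop, add_top, ENNReal.mul_top hLδ]
    exact le_top

lemma lintegral_rpow_le_of_geometric_tail {X : Type*} [MeasurableSpace X] {ν : Measure X}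
    {g : X → ℝ≥0∞} (hg : Measurable g) {β : ℝ≥0∞} (hA : 1 < A) (hδ : 0 < δ) (hL : L ≠ 0)
    (htail : ∀ k : ℕ, ν {x | A ^ k * L < g x} ≤ β ^ k * ν Set.univ) :
    ∫⁻ x, g x ^ δ ∂ν ≤ L ^ δ * ((1 + (A ^ δ - 1) * (1 - A ^ δ * β)⁻¹) * ν Set.univ) := by
  set r := A ^ δ
  have hlayer : ∀ k : ℕ, MeasurableSet (Set.Ioi (A ^ k * L)) := fun k => measurableSet_Ioi
  have hmeas : ∀ k : ℕ,
      Measurable fun x => (Set.Ioi (A ^ k * L)).indicator (fun _ => (r - 1) * r ^ k) (g x) :=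
    fun k => (measurable_const.indicator (hlayer k)).comp hg
  have hint : ∀ k : ℕ,
      ∫⁻ x, (Set.Ioi (A ^ k * L)).indicator (fun _ => (r - 1) * r ^ k) (g x) ∂ν =
        (r - 1) * r ^ k * ν {x | A ^ k * L < g x} :=
    fun k => lintegral_indicator_const_comp hg (hlayer k) _
  calc ∫⁻ x, g x ^ δ ∂ν
      ≤ ∫⁻ x, L ^ δ * (1 + ∑' k : ℕ,
          (Set.Ioi (A ^ k * L)).indicator (fun _ => (r - 1) * r ^ k) (g x)) ∂ν :=
        lintegral_mono fun x => rpow_le_mul_one_add_tsum_indicator hA hδ hL (g x)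
    _ = L ^ δ * (ν Set.univ + ∑' k : ℕ, (r - 1) * r ^ k * ν {x | A ^ k * L < g x}) := by
        rw [lintegral_const_mul _ ((Measurable.tsum hmeas).const_add 1),
          lintegral_add_left measurable_const, lintegral_one,
          lintegral_tsum fun k => (hmeas k).aemeasurable]
        simp only [hint]
    _ ≤ L ^ δ * (ν Set.univ + ∑' k : ℕ, (r - 1) * r ^ k * (β ^ k * ν Set.univ)) := by
        gcongr with k
        exact htail k
    _ = L ^ δ * ((1 + (r - 1) * ∑' k : ℕ, (r * β) ^ k) * ν Set.univ) := by
        rw [one_add_mul, ← ENNReal.tsum_mul_left, ← ENNReal.tsum_mul_right]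
        simp only [mul_pow, mul_assoc]
    _ = L ^ δ * ((1 + (r - 1) * (1 - r * β)⁻¹) * ν Set.univ) := by rw [ENNReal.tsum_geometric]

end GeometricTail

lemma one_add_sub_one_mul_inv_le_two {r β : ℝ≥0∞} (hr : 1 ≤ r) (h : r * (1 + β) ≤ 2) :
    1 + (r - 1) * (1 - r * β)⁻¹ ≤ 2 := by
  have hsum : r - 1 + r * β ≤ 1 := by
    rwa [← ENNReal.add_le_add_iff_left ENNReal.one_ne_top, ← add_assoc, add_tsub_cancel_of_le hr,
      ← mul_one_add, one_add_one_eq_two]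
  have hratio : r - 1 ≤ 1 - r * β :=
    ENNReal.le_sub_of_add_le_right (ne_top_of_le_ne_top ENNReal.one_ne_top
      (le_add_self.trans hsum)) hsum
  calc 1 + (r - 1) * (1 - r * β)⁻¹ ≤ 1 + 1 := by
        gcongr
        exact ENNReal.div_le_of_le_mul (by rwa [one_mul])
    _ = 2 := one_add_one_eq_two

/-- A form of Gehring's lemma. The condition on `δ` makes the constant `1 + (r - 1) / (1 - r * β)`
that comes out of the geometric tail, with `r = (2 * D) ^ δ`, at most `2`. -/
lemma NestedPartition.lintegral_rpow_one_add_le {X : Type*} [MeasurableSpace X]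
    (P : NestedPartition X) {μ : Measure X} {f : X → ℝ≥0∞} (hf : Measurable f) {D β L : ℝ≥0∞}
    {δ : ℝ} (hD : ∀ j x, μ (P.cell j x) ≤ D * μ (P.cell (j + 1) x)) (hD1 : 1 ≤ D) (hDtop : D ≠ ∞)
    (hβ : ∀ j x, HalfSubsetBound μ (μ.withDensity f) β (P.cell j x))
    (hdiff : ∀ t, ∀ᵐ x ∂μ, x ∉ P.superlevel μ (μ.withDensity f) t → f x ≤ t)
    (hL0 : L ≠ 0) (hLtop : L ≠ ∞)
    (hroot : ∀ x, μ.withDensity f (P.cell 0 x) ≤ L * μ (P.cell 0 x))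
    (hδ : 0 < δ) (hδβ : (2 * D) ^ δ * (1 + β) ≤ 2) :
    ∫⁻ x, f x ^ (1 + δ) ∂μ ≤ 2 * (L ^ δ * ∫⁻ x, f x ∂μ) := by
  set ν := μ.withDensity f with hν
  set r := (2 * D) ^ δ
  have hA : 1 < 2 * D := ENNReal.one_lt_two.trans_le (le_mul_of_one_le_right zero_le hD1)
  have htail : ∀ k : ℕ, ν {x | (2 * D) ^ k * L < f x} ≤ β ^ k * ν Set.univ := fun k => by
    refine (measure_mono_ae ?_).trans
      (P.measure_superlevel_pow_mul_le hD hD1 hDtop hβ hL0 hLtop hroot k)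
    filter_upwards [(withDensity_absolutelyContinuous μ f).ae_le (hdiff ((2 * D) ^ k * L))]
      with x hx hlt
    exact by_contra fun hmem => (hx hmem).not_gt hlt
  have hconst : 1 + (r - 1) * (1 - r * β)⁻¹ ≤ 2 :=
    one_add_sub_one_mul_inv_le_two (ENNReal.one_lt_rpow hA hδ).le hδβ
  calc ∫⁻ x, f x ^ (1 + δ) ∂μ = ∫⁻ x, f x ^ δ ∂ν := by
        rw [hν, lintegral_withDensity_eq_lintegral_mul _ hf (hf.pow_const δ)]
        refine lintegral_congr fun x => ?_
        rw [Pi.mul_apply, ENNReal.rpow_add_of_nonneg _ _ zero_le_one hδ.le, ENNReal.rpow_one]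
    _ ≤ L ^ δ * ((1 + (r - 1) * (1 - r * β)⁻¹) * ν Set.univ) :=
        lintegral_rpow_le_of_geometric_tail hf hA hδ hL0 htail
    _ ≤ L ^ δ * (2 * ν Set.univ) := by gcongr
    _ = 2 * (L ^ δ * ∫⁻ x, f x ∂μ) := by
        rw [hν, withDensity_apply _ .univ, setLIntegral_univ, mul_left_comm]

lemma exists_pos_rpow_mul_one_add_le_two {A β : ℝ≥0∞} (hA : A ≠ ∞) (hβ : β < 1) :
    ∃ δ : ℝ, 0 < δ ∧ A ^ δ * (1 + β) ≤ 2 := by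
  have hq : 1 < 2 / (1 + β) := by
    rw [ENNReal.lt_div_iff_mul_lt (by simp) (by simp), one_mul, ← one_add_one_eq_two]
    gcongr
    finiteness
  obtain ⟨N, hAN, hN⟩ := (((ENNReal.tendsto_pow_atTop_nhds_top_iff.2 hq).eventually
    (lt_mem_nhds hA.lt_top)).and (Filter.eventually_gt_atTop 0)).exists
  have hN' : (0 : ℝ) < N := by exact_mod_cast hN
  refine ⟨(N : ℝ)⁻¹, inv_pos.2 hN', ENNReal.mul_le_of_le_div ?_⟩
  rw [ENNReal.rpow_inv_le_iff hN', ENNReal.rpow_natCast]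
  exact hAN.le

/-- The half-open cube with corner `a` and side length `l`. -/
def cube (a : Fin n → ℝ) (l : ℝ) : Set (Fin n → ℝ) :=
  {x | ∀ i, a i ≤ x i ∧ x i < a i + l}

lemma isCube_cube (a : Fin n → ℝ) {l : ℝ} (hl : 0 < l) : IsCube (cube a l) :=
  ⟨a, l, hl, rfl⟩

lemma cube_eq_pi_Ico (a : Fin n → ℝ) (l : ℝ) :
    cube a l = Set.univ.pi fun i => Set.Ico (a i) (a i + l) := by
  ext
  simp [cube]

lemma volume_cube (a : Fin n → ℝ) (l : ℝ) : volume (cube a l) = ENNReal.ofReal l ^ n := by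
  simp [cube_eq_pi_Ico, Real.volume_pi_Ico]

lemma cube_subset_closedBall (a : Fin n → ℝ) {l : ℝ} (hl : 0 ≤ l) :
    cube a l ⊆ Metric.closedBall (fun i => a i + l / 2) (l / 2) := by
  rw [closedBall_pi _ (by positivity), cube_eq_pi_Ico]
  refine Set.pi_mono fun i _ => ?_
  rw [Real.closedBall_eq_Icc, add_sub_cancel_right, add_assoc, add_halves]
  exact Set.Ico_subset_Icc_self

lemma cube_ae_eq_closedBall (a : Fin n → ℝ) {l : ℝ} (hl : 0 ≤ l) :
    cube a l =ᵐ[volume] Metric.closedBall (fun i => a i + l / 2) (l / 2) := by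
  rw [closedBall_pi _ (by positivity), cube_eq_pi_Ico]
  simp only [Real.closedBall_eq_Icc, add_sub_cancel_right, add_assoc, add_halves]
  rw [Set.pi_univ_Icc]
  exact Measure.univ_pi_Ico_ae_eq_Icc

namespace IsCube

variable {Q : Set (Fin n → ℝ)}

lemma measurableSet (hQ : IsCube Q) : MeasurableSet Q := by
  obtain ⟨a, l, -, rfl⟩ := hQ
  change MeasurableSet (cube a l)
  rw [cube_eq_pi_Ico]
  exact .univ_pi fun i => measurableSet_Ico

lemma volume_ne_zero (hQ : IsCube Q) : volume Q ≠ 0 := by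
  obtain ⟨a, l, hl, rfl⟩ := hQ
  change volume (cube a l) ≠ 0
  rw [volume_cube]
  exact pow_ne_zero _ (ENNReal.ofReal_pos.2 hl).ne'

lemma volume_ne_top (hQ : IsCube Q) : volume Q ≠ ∞ := by
  obtain ⟨a, l, -, rfl⟩ := hQ
  change volume (cube a l) ≠ ∞
  rw [volume_cube]
  finiteness

lemma eavg_mul_volume (hQ : IsCube Q) (f : (Fin n → ℝ) → ℝ≥0∞) :
    eavg Q f * volume Q = ∫⁻ x in Q, f x :=
  ENNReal.div_mul_cancel hQ.volume_ne_zero hQ.volume_ne_top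

end IsCube

section Dyadic

variable (a : Fin n → ℝ) {l : ℝ}

/-- The position, in units of `l / 2 ^ j` from the corner `a`, of the dyadic cube of generation `j`
containing `x`. -/
def dyadicIndex (a : Fin n → ℝ) (l : ℝ) (j : ℕ) (x : Fin n → ℝ) : Fin n → ℤ :=
  fun i => ⌊(x i - a i) / l * 2 ^ j⌋

/-- The corner of the dyadic cube of generation `j` containing `x`. -/
def dyadicCorner (a : Fin n → ℝ) (l : ℝ) (j : ℕ) (x : Fin n → ℝ) : Fin n → ℝ :=
  fun i => a i + dyadicIndex a l j x i * (l / 2 ^ j)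

lemma measurable_dyadicIndex (a : Fin n → ℝ) (l : ℝ) (j : ℕ) : Measurable (dyadicIndex a l j) := by
  unfold dyadicIndex
  fun_prop

lemma dyadicIndex_eq_div_two (a : Fin n → ℝ) (l : ℝ) (j : ℕ) (x : Fin n → ℝ) (i : Fin n) :
    dyadicIndex a l j x i = dyadicIndex a l (j + 1) x i / 2 := by
  simpa [dyadicIndex, pow_succ, mul_assoc] using
    (Int.mul_cast_floor_div_cancel_of_pos two_pos ((x i - a i) / l * 2 ^ j)).symm

/-- The dyadic grid on `ℝⁿ` generated by the cube with corner `a` and side length `l`. -/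
def dyadicPartition (a : Fin n → ℝ) (l : ℝ) : NestedPartition (Fin n → ℝ) where
  cell j x := dyadicIndex a l j ⁻¹' {dyadicIndex a l j x}
  mem_cell _ _ := rfl
  cell_eq_of_mem {j x y} h := by rw [Set.mem_singleton_iff.1 h]
  cell_succ_subset j x y h := funext fun i => by
    rw [dyadicIndex_eq_div_two, dyadicIndex_eq_div_two a l j x, Set.mem_singleton_iff.1 h]
  measurableSet_cell j x := measurable_dyadicIndex a l j (measurableSet_singleton _)
  countable_range_cell j := (Set.countable_range fun k => dyadicIndex a l j ⁻¹' {k}).mono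
    (Set.range_comp_subset_range (dyadicIndex a l j) fun k => dyadicIndex a l j ⁻¹' {k})

lemma dyadicPartition_cell (hl : 0 < l) (j : ℕ) (x : Fin n → ℝ) :
    (dyadicPartition a l).cell j x = cube (dyadicCorner a l j x) (l / 2 ^ j) := by
  ext y
  have hside : 0 < l / 2 ^ j := by positivity
  simp only [dyadicPartition, Set.mem_preimage, Set.mem_singleton_iff, funext_iff, cube,
    Set.mem_ofPred_eq, dyadicCorner]
  refine forall_congr' fun i => ?_
  have hscale : (y i - a i) / l * 2 ^ j = (y i - a i) / (l / 2 ^ j) := by field_simp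
  rw [dyadicIndex, hscale, Int.floor_eq_iff, le_div_iff₀ hside, div_lt_iff₀ hside, add_one_mul]
  refine and_congr ?_ ?_ <;> constructor <;> intro h <;> linarith

lemma isCube_dyadicPartition_cell (hl : 0 < l) (j : ℕ) (x : Fin n → ℝ) :
    IsCube ((dyadicPartition a l).cell j x) := by
  rw [dyadicPartition_cell a hl]
  exact isCube_cube _ (by positivity)

lemma dyadicPartition_cell_zero_self (hl : 0 < l) :
    (dyadicPartition a l).cell 0 a = cube a l := by
  rw [dyadicPartition_cell a hl]
  congr 1
  · ext i
    simp [dyadicCorner, dyadicIndex]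
  · simp

lemma volume_dyadicPartition_cell (hl : 0 < l) (j : ℕ) (x : Fin n → ℝ) :
    volume ((dyadicPartition a l).cell j x) =
      2 ^ n * volume ((dyadicPartition a l).cell (j + 1) x) := by
  have hside : l / 2 ^ j = 2 * (l / 2 ^ (j + 1)) := by
    rw [pow_succ]
    field_simp
  rw [dyadicPartition_cell a hl, dyadicPartition_cell a hl, volume_cube, volume_cube, ← mul_pow,
    hside, ENNReal.ofReal_mul zero_le_two, ENNReal.ofReal_ofNat]

lemma tendsto_div_two_pow_div_two (hl : 0 < l) :
    Filter.Tendsto (fun j : ℕ => l / 2 ^ j / 2) Filter.atTop (nhdsWithin 0 (Set.Ioi 0)) := by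
  refine tendsto_nhdsWithin_iff.2 ⟨?_, .of_forall fun j => Set.mem_Ioi.2 (by positivity)⟩
  simpa using ((tendsto_const_nhds (x := l)).div_atTop
    (tendsto_pow_atTop_atTop_of_one_lt (one_lt_two : (1 : ℝ) < 2))).div_const 2

lemma ae_tendsto_eavg_dyadicPartition_cell (hl : 0 < l) {f : (Fin n → ℝ) → ℝ≥0∞}
    (hf : AEMeasurable f) (hfint : ∫⁻ x, f x ≠ ∞) :
    ∀ᵐ x, Filter.Tendsto (fun j => eavg ((dyadicPartition a l).cell j x) f) Filter.atTop
      (nhds (f x)) := by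
  let V := IsUnifLocDoublingMeasure.vitaliFamily (volume : Measure (Fin n → ℝ)) 1
  filter_upwards [V.ae_tendsto_lintegral_div hf hfint] with x hx
  let center : ℕ → Fin n → ℝ := fun j i => dyadicCorner a l j x i + l / 2 ^ j / 2
  have hball : Filter.Tendsto (fun j => Metric.closedBall (center j) (l / 2 ^ j / 2)) Filter.atTop
      (V.filterAt x) := by
    refine IsUnifLocDoublingMeasure.tendsto_closedBall_filterAt volume center _
      (tendsto_div_two_pow_div_two hl) (.of_forall fun j => ?_)
    rw [one_mul]
    refine cube_subset_closedBall _ (by positivity) ?_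
    rw [← dyadicPartition_cell a hl]
    exact (dyadicPartition a l).mem_cell j x
  refine (hx.comp hball).congr fun j => ?_
  have hcell : (dyadicPartition a l).cell j x =ᵐ[volume]
      Metric.closedBall (center j) (l / 2 ^ j / 2) := by
    rw [dyadicPartition_cell a hl]
    exact cube_ae_eq_closedBall _ (by positivity)
  rw [Function.comp_apply, eavg, setLIntegral_congr hcell, measure_congr hcell]

lemma ae_le_of_notMem_superlevel_dyadicPartition (hl : 0 < l) {f : (Fin n → ℝ) → ℝ≥0∞}
    (hf : AEMeasurable f) (hfint : ∫⁻ x, f x ≠ ∞) (t : ℝ≥0∞) :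
    ∀ᵐ x, x ∉ (dyadicPartition a l).superlevel volume (volume.withDensity f) t → f x ≤ t := by
  filter_upwards [ae_tendsto_eavg_dyadicPartition_cell a hl hf hfint] with x hx hmem
  refine le_of_tendsto' hx fun j => ENNReal.div_le_of_le_mul ?_
  rw [← withDensity_apply _ ((dyadicPartition a l).measurableSet_cell j x)]
  exact not_lt.1 fun hlt => hmem ⟨j, hlt⟩

end Dyadic

lemma measure_univ_rpow_le_lintegral_mul {X : Type*} [MeasurableSpace X] {μ : Measure X}
    {w : X → ℝ≥0∞} (hw : AEMeasurable w μ) (hpos : ∀ᵐ x ∂μ, 0 < w x ∧ w x < ∞) {p : ℝ}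
    (hp : 1 < p) :
    μ Set.univ ^ p ≤ (∫⁻ x, w x ∂μ) * (∫⁻ x, w x ^ (1 - p / (p - 1)) ∂μ) ^ (p - 1) := by
  have hp0 : 0 < p := zero_lt_one.trans hp
  have hp1 : p - 1 ≠ 0 := (sub_pos.2 hp).ne'
  have hprod :
      ∫⁻ x, ((fun x => w x ^ (1 / p)) * fun x => w x ^ (-(1 / p))) x ∂μ = μ Set.univ := by
    rw [← lintegral_one]
    refine lintegral_congr_ae ?_
    filter_upwards [hpos] with x hx
    rw [Pi.mul_apply, ← ENNReal.rpow_add _ _ hx.1.ne' hx.2.ne, add_neg_cancel, ENNReal.rpow_zero]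
  have hfst : ∀ x, (w x ^ (1 / p)) ^ p = w x := fun x => by
    rw [← ENNReal.rpow_mul, one_div_mul_cancel hp0.ne', ENNReal.rpow_one]
  have hsnd : ∀ x, (w x ^ (-(1 / p))) ^ (p / (p - 1)) = w x ^ (1 - p / (p - 1)) := fun x => by
    rw [← ENNReal.rpow_mul]
    congr 1
    field_simp
    ring
  have holder := ENNReal.lintegral_mul_le_Lp_mul_Lq μ (Real.HolderConjugate.conjExponent hp)
    (hw.pow_const (1 / p)) (hw.pow_const (-(1 / p)))
  simp only [hprod, hfst, Real.conjExponent, hsnd] at holder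
  calc μ Set.univ ^ p
      ≤ ((∫⁻ x, w x ∂μ) ^ (1 / p) *
          (∫⁻ x, w x ^ (1 - p / (p - 1)) ∂μ) ^ (1 / (p / (p - 1)))) ^ p := by gcongr
    _ = (∫⁻ x, w x ∂μ) * (∫⁻ x, w x ^ (1 - p / (p - 1)) ∂μ) ^ (p - 1) := by
        rw [ENNReal.mul_rpow_of_nonneg _ _ hp0.le, ← ENNReal.rpow_mul, ← ENNReal.rpow_mul,
          one_div_mul_cancel hp0.ne', ENNReal.rpow_one, one_div_div, div_mul_cancel₀ _ hp0.ne']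

lemma measure_add_measure_sdiff_of_subset {X : Type*} [MeasurableSpace X] {μ : Measure X}
    {C E : Set X} (hEC : E ⊆ C) (hE : MeasurableSet E) : μ E + μ (C \ E) = μ C := by
  rw [← measure_inter_add_sdiff C hE, Set.inter_eq_right.2 hEC]

lemma measure_le_two_mul_measure_sdiff {X : Type*} [MeasurableSpace X] {μ : Measure X}
    {C E : Set X} (hEtop : μ E ≠ ∞) (hEC : E ⊆ C) (hE : MeasurableSet E) (h : 2 * μ E ≤ μ C) :
    μ C ≤ 2 * μ (C \ E) := by
  have hsum := measure_add_measure_sdiff_of_subset (μ := μ) hEC hE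
  have hle : μ E ≤ μ (C \ E) := by
    rwa [← hsum, two_mul, ENNReal.add_le_add_iff_left hEtop] at h
  rw [← hsum, two_mul]
  gcongr

lemma measure_le_one_sub_inv_mul {X : Type*} [MeasurableSpace X] {ν : Measure X} {C E : Set X}
    {M : ℝ≥0∞} (hC : ν C ≠ ∞) (hEC : E ⊆ C) (hE : MeasurableSet E) (h : ν C ≤ M * ν (C \ E)) :
    ν E ≤ (1 - M⁻¹) * ν C := by
  have hinv : M⁻¹ * ν C ≤ ν (C \ E) := by
    rw [mul_comm]
    exact ENNReal.div_le_of_le_mul' h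
  have hinvtop : M⁻¹ * ν C ≠ ∞ :=
    ne_top_of_le_ne_top (measure_ne_top_of_subset Set.sdiff_subset hC) hinv
  rw [ENNReal.sub_mul fun _ _ => hC, one_mul]
  refine ENNReal.le_sub_of_add_le_right hinvtop ?_
  calc ν E + M⁻¹ * ν C ≤ ν E + ν (C \ E) := by gcongr
    _ = ν C := measure_add_measure_sdiff_of_subset hEC hE

section Muckenhoupt

variable {p : ℝ} {w : (Fin n → ℝ) → ℝ≥0∞} {Q : Set (Fin n → ℝ)}

lemma ae_eavg_div_le_ApConst_one (hQ : IsCube Q) :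
    ∀ᵐ x ∂volume.restrict Q, eavg Q w / w x ≤ ApConst 1 w := by
  filter_upwards [ENNReal.ae_le_essSup (μ := volume.restrict Q) fun x => eavg Q w / w x] with x hx
  rw [ApConst, if_pos rfl]
  exact hx.trans (le_iSup₂ (f := fun (Q : Set (Fin n → ℝ)) (_ : IsCube Q) =>
    essSup (fun x => eavg Q w / w x) (volume.restrict Q)) Q hQ)

lemma eavg_mul_eavg_rpow_le_ApConst (hp : p ≠ 1) (hQ : IsCube Q) :
    eavg Q w * (eavg Q fun x => w x ^ (1 - p / (p - 1))) ^ (p - 1) ≤ ApConst p w := by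
  rw [ApConst, if_neg hp]
  exact le_iSup₂ (f := fun (Q : Set (Fin n → ℝ)) (_ : IsCube Q) =>
    eavg Q w * (eavg Q fun x => w x ^ (1 - p / (p - 1))) ^ (p - 1)) Q hQ

namespace IsWeight

lemma setLIntegral_mul_volume_le_of_one (hw : IsWeight w) (hQ : IsCube Q) {S : Set (Fin n → ℝ)}
    (hSQ : S ⊆ Q) :
    (∫⁻ x in Q, w x) * volume S ≤ ApConst 1 w * (∫⁻ x in S, w x) * volume Q := by
  have hpointwise : ∀ᵐ x ∂volume.restrict S, eavg Q w ≤ ApConst 1 w * w x := by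
    filter_upwards [ae_restrict_of_ae_restrict_of_subset hSQ (ae_eavg_div_le_ApConst_one hQ),
      ae_restrict_of_ae hw.2.1] with x hx hwx
    rwa [ENNReal.div_le_iff hwx.1.ne' hwx.2.ne] at hx
  have hint : eavg Q w * volume S ≤ ∫⁻ x in S, ApConst 1 w * w x := by
    rw [← setLIntegral_const]
    exact lintegral_mono_ae hpointwise
  calc (∫⁻ x in Q, w x) * volume S = eavg Q w * volume S * volume Q := by
        rw [← hQ.eavg_mul_volume, mul_right_comm]
    _ ≤ (∫⁻ x in S, ApConst 1 w * w x) * volume Q := by gcongr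
    _ = ApConst 1 w * (∫⁻ x in S, w x) * volume Q := by rw [lintegral_const_mul _ hw.1]

lemma setLIntegral_mul_volume_rpow_le_of_one_lt (hw : IsWeight w) (hp : 1 < p) (hQ : IsCube Q)
    {S : Set (Fin n → ℝ)} (hSQ : S ⊆ Q) :
    (∫⁻ x in Q, w x) * volume S ^ p ≤ ApConst p w * (∫⁻ x in S, w x) * volume Q ^ p := by
  have hp1 : 0 ≤ p - 1 := (sub_pos.2 hp).le
  have hholder : volume S ^ p ≤
      (∫⁻ x in S, w x) * (∫⁻ x in Q, w x ^ (1 - p / (p - 1))) ^ (p - 1) := by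
    have h := measure_univ_rpow_le_lintegral_mul (μ := volume.restrict S) hw.1.aemeasurable
      (ae_restrict_of_ae hw.2.1) hp
    rw [Measure.restrict_apply_univ] at h
    exact h.trans (by gcongr)
  have hvol : volume Q ^ p = volume Q * volume Q ^ (p - 1) := by
    conv_lhs => rw [← add_sub_cancel 1 p]
    rw [ENNReal.rpow_add_of_nonneg _ _ zero_le_one hp1, ENNReal.rpow_one]
  calc (∫⁻ x in Q, w x) * volume S ^ p
      ≤ (∫⁻ x in Q, w x) *
          ((∫⁻ x in S, w x) * (∫⁻ x in Q, w x ^ (1 - p / (p - 1))) ^ (p - 1)) := by gcongr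
    _ = eavg Q w * (eavg Q fun x => w x ^ (1 - p / (p - 1))) ^ (p - 1) *
          (∫⁻ x in S, w x) * volume Q ^ p := by
        rw [← hQ.eavg_mul_volume w, ← hQ.eavg_mul_volume fun x => w x ^ (1 - p / (p - 1)),
          ENNReal.mul_rpow_of_nonneg _ _ hp1, hvol]
        ring
    _ ≤ ApConst p w * (∫⁻ x in S, w x) * volume Q ^ p := by
        gcongr
        exact eavg_mul_eavg_rpow_le_ApConst hp.ne' hQ

lemma setLIntegral_mul_volume_rpow_le (hw : IsWeight w) (hp : 1 ≤ p) (hQ : IsCube Q)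
    {S : Set (Fin n → ℝ)} (hSQ : S ⊆ Q) :
    (∫⁻ x in Q, w x) * volume S ^ p ≤ ApConst p w * (∫⁻ x in S, w x) * volume Q ^ p := by
  rcases hp.eq_or_lt with rfl | hp
  · simpa only [ENNReal.rpow_one] using hw.setLIntegral_mul_volume_le_of_one hQ hSQ
  · exact hw.setLIntegral_mul_volume_rpow_le_of_one_lt hp hQ hSQ

lemma halfSubsetBound (hw : IsWeight w) (hp : 1 ≤ p) {K : ℝ≥0∞} (hK : ApConst p w ≤ K)
    (hQ : IsCube Q) : HalfSubsetBound volume (volume.withDensity w) (1 - (2 ^ p * K)⁻¹) Q := by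
  intro E hEQ hE hvolE
  have hp0 : 0 < p := zero_lt_one.trans_le hp
  have hQE : MeasurableSet (Q \ E) := hQ.measurableSet.diff hE
  have hmass : volume.withDensity w Q ≠ ∞ := by
    rw [withDensity_apply _ hQ.measurableSet]
    exact (hw.2.2 Q hQ).ne
  refine measure_le_one_sub_inv_mul hmass hEQ hE ?_
  rw [withDensity_apply _ hQ.measurableSet, withDensity_apply _ hQE]
  have hvol : volume Q ≤ 2 * volume (Q \ E) :=
    measure_le_two_mul_measure_sdiff (measure_ne_top_of_subset hEQ hQ.volume_ne_top) hEQ hE hvolE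
  have hvol0 : volume Q ^ p ≠ 0 := by simp [hQ.volume_ne_zero, hQ.volume_ne_top]
  have hvoltop : volume Q ^ p ≠ ∞ := by simp [hQ.volume_ne_zero, hQ.volume_ne_top]
  refine (ENNReal.mul_le_mul_iff_left hvol0 hvoltop).1 ?_
  calc (∫⁻ x in Q, w x) * volume Q ^ p
      ≤ (∫⁻ x in Q, w x) * (2 * volume (Q \ E)) ^ p := by gcongr
    _ = 2 ^ p * ((∫⁻ x in Q, w x) * volume (Q \ E) ^ p) := by
        rw [ENNReal.mul_rpow_of_nonneg _ _ hp0.le, mul_left_comm]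
    _ ≤ 2 ^ p * (ApConst p w * (∫⁻ x in Q \ E, w x) * volume Q ^ p) :=
        mul_le_mul_right (hw.setLIntegral_mul_volume_rpow_le hp hQ Set.sdiff_subset) _
    _ ≤ 2 ^ p * (K * (∫⁻ x in Q \ E, w x) * volume Q ^ p) := by gcongr
    _ = 2 ^ p * K * (∫⁻ x in Q \ E, w x) * volume Q ^ p := by ring

lemma eavg_ne_zero (hw : IsWeight w) (hQ : IsCube Q) : eavg Q w ≠ 0 := by
  have hpos : 0 < ∫⁻ x in Q, w x := by
    refine lt_of_le_of_ne' zero_le fun h0 => hQ.volume_ne_zero ?_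
    rw [lintegral_eq_zero_iff hw.1] at h0
    rw [← Measure.restrict_eq_zero, ← ae_eq_bot, ← Filter.eventually_false_iff_eq_bot]
    filter_upwards [h0, ae_restrict_of_ae hw.2.1] with x hx0 hx
    exact hx.1.ne' hx0
  exact (ENNReal.div_pos hpos.ne' hQ.volume_ne_top).ne'

lemma eavg_ne_top (hw : IsWeight w) (hQ : IsCube Q) : eavg Q w ≠ ∞ :=
  ENNReal.div_ne_top (hw.2.2 Q hQ).ne hQ.volume_ne_zero

lemma setLIntegral_rpow_one_add_le (hw : IsWeight w) {β : ℝ≥0∞}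
    (hβ : ∀ C : Set (Fin n → ℝ), IsCube C → HalfSubsetBound volume (volume.withDensity w) β C)
    {δ : ℝ} (hδ : 0 < δ) (hδβ : (2 * 2 ^ n) ^ δ * (1 + β) ≤ 2) (hQ : IsCube Q) :
    ∫⁻ x in Q, w x ^ (1 + δ) ≤ 2 * (eavg Q w ^ δ * ∫⁻ x in Q, w x) := by
  obtain ⟨a, l, hl, hQa⟩ := id hQ
  let P := dyadicPartition a l
  have hroot : P.cell 0 a = Q := (dyadicPartition_cell_zero_self a hl).trans hQa.symm
  have hQm := hQ.measurableSet
  have hν : volume.withDensity (Q.indicator w) = (volume.withDensity w).restrict Q := by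
    rw [withDensity_indicator hQm, restrict_withDensity hQm]
  have hcell : ∀ j x, P.cell j x ⊆ Q ∨ Disjoint (P.cell j x) Q := fun j x =>
    hroot ▸ P.cell_subset_or_disjoint (Nat.zero_le j) x a
  have hfint : ∫⁻ x, Q.indicator w x ≠ ∞ := by
    rw [lintegral_indicator hQm]
    exact (hw.2.2 Q hQ).ne
  have hrootavg : ∀ x, volume.withDensity (Q.indicator w) (P.cell 0 x) ≤
      eavg Q w * volume (P.cell 0 x) := by
    rw [hν, ← hroot]
    refine P.restrict_cell_apply_cell_le ?_
    rw [hroot, withDensity_apply _ hQm, hQ.eavg_mul_volume]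
  have hmain := P.lintegral_rpow_one_add_le (μ := volume) (hw.1.indicator hQm) (L := eavg Q w)
    (fun j x => (volume_dyadicPartition_cell a hl j x).le) (one_le_pow₀ one_le_two)
    (by finiteness)
    (fun j x => hν ▸ HalfSubsetBound.restrict (hcell j x) fun _ =>
      hβ _ (isCube_dyadicPartition_cell a hl j x))
    (ae_le_of_notMem_superlevel_dyadicPartition a hl (hw.1.indicator hQm).aemeasurable hfint)
    (hw.eavg_ne_zero hQ) (hw.eavg_ne_top hQ)
    hrootavg hδ hδβ
  have hpow : (fun x => Q.indicator w x ^ (1 + δ)) = Q.indicator fun x => w x ^ (1 + δ) := by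
    ext x
    by_cases hx : x ∈ Q
    · simp only [Set.indicator_of_mem hx]
    · simp only [Set.indicator_of_notMem hx, ENNReal.zero_rpow_of_pos (show 0 < 1 + δ by linarith)]
  rwa [hpow, lintegral_indicator hQm, lintegral_indicator hQm] at hmain

lemma eavg_rpow_rpow_le_two_mul_eavg (hw : IsWeight w) {β : ℝ≥0∞}
    (hβ : ∀ C : Set (Fin n → ℝ), IsCube C → HalfSubsetBound volume (volume.withDensity w) β C)
    {δ : ℝ} (hδ : 0 < δ) (hδβ : (2 * 2 ^ n) ^ δ * (1 + β) ≤ 2) (hQ : IsCube Q) :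
    (eavg Q fun x => w x ^ (1 + δ)) ^ (1 / (1 + δ)) ≤ 2 * eavg Q w := by
  have hs : 0 < 1 + δ := by linarith
  rw [one_div, ENNReal.rpow_inv_le_iff hs]
  calc eavg Q (fun x => w x ^ (1 + δ))
      ≤ 2 * (eavg Q w ^ δ * ∫⁻ x in Q, w x) / volume Q :=
        ENNReal.div_le_div_right (hw.setLIntegral_rpow_one_add_le hβ hδ hδβ hQ) _
    _ = 2 * (eavg Q w ^ δ * eavg Q w) := by rw [mul_div_assoc, mul_div_assoc, ← eavg]
    _ = 2 * eavg Q w ^ (1 + δ) := by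
        rw [ENNReal.rpow_add_of_nonneg _ _ zero_le_one hδ.le, ENNReal.rpow_one, mul_comm (_ ^ δ)]
    _ ≤ 2 ^ (1 + δ) * eavg Q w ^ (1 + δ) := by
        gcongr
        exact ENNReal.le_rpow_self_of_one_le one_le_two (by linarith)
    _ = (2 * eavg Q w) ^ (1 + δ) := by rw [ENNReal.mul_rpow_of_nonneg _ _ hs.le]

end IsWeight

lemma RHConst_le {s : ℝ} {C : ℝ≥0∞}
    (h : ∀ Q : Set (Fin n → ℝ), IsCube Q →
      (eavg Q fun x => w x ^ s) ^ (1 / s) ≤ C * eavg Q w) : RHConst s w ≤ C :=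
  iSup₂_le fun Q hQ => ENNReal.div_le_of_le_mul (h Q hQ)

end Muckenhoupt

/-- If `w ∈ A_p` (`1 ≤ p < ∞`) then there is `s > 1`, depending only on
`n`, `p` and an upper bound `K` for `[w]_{A_p}`, such that for every cube `Q`,
`(⨍_Q w^s)^{1/s} ≤ 2 ⨍_Q w`; in particular `w ∈ RH_s`. -/
theorem statement3 (n : ℕ) (p : ℝ) (hp : 1 ≤ p) (K : ℝ≥0∞) (hK : K < ∞) :
    ∃ s : ℝ, 1 < s ∧
      ∀ w : (Fin n → ℝ) → ℝ≥0∞, IsWeight w → ApConst p w ≤ K →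
        (∀ Q : Set (Fin n → ℝ), IsCube Q →
          (eavg Q fun x => w x ^ s) ^ (1 / s) ≤ 2 * eavg Q w) ∧ MemRH s w := by
  have hKtop : 2 ^ p * K ≠ ∞ := ENNReal.mul_ne_top (by simp) hK.ne
  have hβ : 1 - (2 ^ p * K)⁻¹ < 1 :=
    ENNReal.sub_lt_self ENNReal.one_ne_top one_ne_zero (ENNReal.inv_ne_zero.2 hKtop)
  obtain ⟨δ, hδ, hδβ⟩ := exists_pos_rpow_mul_one_add_le_two
    (A := 2 * 2 ^ n) (by finiteness) hβ
  refine ⟨1 + δ, by linarith, fun w hw hA => ?_⟩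
  have hRH : ∀ Q : Set (Fin n → ℝ), IsCube Q →
      (eavg Q fun x => w x ^ (1 + δ)) ^ (1 / (1 + δ)) ≤ 2 * eavg Q w := fun Q hQ =>
    hw.eavg_rpow_rpow_le_two_mul_eavg (fun C hC => hw.halfSubsetBound hp hA hC) hδ hδβ hQ
  exact ⟨hRH, (RHConst_le hRH).trans_lt (by finiteness)⟩
end
end

section
/- (Jones factorization theorem.) Let 1 < p < ∞. A weight w belongs to A_p if and only if there exist weights w₁, w₂ ∈ A_1 such that w = w₁ w₂^{1−p}. -/
open MeasureTheory ENNReal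
open scoped Classical

noncomputable section

variable {n : ℕ}

/-!
If `w₁, w₂ ∈ A_1`, then `w₂ ^ (1 - p) ≤ C (⨍_Q w₂) ^ (1 - p)` on `Q`, and symmetrically for `w₁` in
the dual weight, so the averages cancel in the `A_p` product of `w₁ w₂ ^ (1 - p)`.

The converse follows Coifman, Jones and Rubio de Francia. Let `σ = w ^ (1 - p')`. By Muckenhoupt's
theorem the maximal operator `M` is bounded on `L^p(w)` and on `L^{p'}(σ)`; this comes from Lerner's
pointwise bound `(M f) ^ (p - 1) ≤ K M_w (M_σ (f / σ) ^ (p - 1) / w)` and from the boundedness of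
weighted centred maximal operators, which the Besicovitch covering theorem gives with constants
independent of the weight. Equivalently, `F ↦ w M ((F / w) ^ (1 / p)) ^ p` and its dual
`F ↦ σ M ((F / σ) ^ (1 / p')) ^ p'` are bounded on `L¹`. Iterating their sum produces an integrable
`F > 0` on which both are at most `D F`. This says that `w₂ = (F / w) ^ (1 / p)` and
`w₁ = (F / σ) ^ (1 / p')` are in `A_1`, and `F` cancels in `w₁ w₂ ^ (1 - p) = w`.

All of this takes place on balls of a doubling metric measure space; sup-norm balls of `ℝⁿ` are
cubes up to null sets.
-/

open Metric Set Filter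

section LayerCake

variable {α : Type*} [MeasurableSpace α] {μ : Measure α}

theorem lintegral_ofReal_rpow_Ioi_zero_eq_top (s : ℝ) :
    ∫⁻ t in Ioi (0 : ℝ), ENNReal.ofReal (t ^ s) = ∞ := by
  by_contra h
  refine not_integrableOn_Ioi_rpow s ((lintegral_ofReal_ne_top_iff_integrable ?_ ?_).1 h)
  · exact (measurable_id.pow_const s).aestronglyMeasurable
  · filter_upwards [ae_restrict_mem measurableSet_Ioi] with t ht
    exact Real.rpow_nonneg (mem_Ioi.1 ht).le s

/-- Mathlib's layer cake formula treats real-valued functions; here `f` may be infinite. -/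
theorem lintegral_rpow_eq_lintegral_measure_ofReal_lt {f : α → ℝ≥0∞} (hf : Measurable f) {s : ℝ}
    (hs : 0 < s) :
    ∫⁻ x, f x ^ s ∂μ = ENNReal.ofReal s *
      ∫⁻ t in Ioi (0 : ℝ), μ {x | ENNReal.ofReal t < f x} * ENNReal.ofReal (t ^ (s - 1)) := by
  by_cases hfin : ∀ᵐ x ∂μ, f x ≠ ∞
  · have hcake := lintegral_rpow_eq_lintegral_meas_lt_mul μ (f := fun x => (f x).toReal)
      (ae_of_all _ fun _ => toReal_nonneg) hf.ennreal_toReal.aemeasurable hs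
    have hpow : ∫⁻ x, ENNReal.ofReal ((f x).toReal ^ s) ∂μ = ∫⁻ x, f x ^ s ∂μ := by
      refine lintegral_congr_ae (hfin.mono fun x hx => ?_)
      simp only [← ofReal_rpow_of_nonneg toReal_nonneg hs.le, ofReal_toReal hx]
    rw [← hpow, hcake]
    congr 1
    refine setLIntegral_congr_fun measurableSet_Ioi fun t _ => ?_
    have hlevel : {x | t < (f x).toReal} =ᵐ[μ] {x | ENNReal.ofReal t < f x} :=
      hfin.mono fun x hx => propext (ofReal_lt_iff_lt_toReal (le_of_lt ‹_›) hx).symm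
    simp only [measure_congr hlevel]
  · have htop : μ {x | f x = ∞} ≠ 0 := fun h => hfin (by simpa [ae_iff] using h)
    have hlhs : ∫⁻ x, f x ^ s ∂μ = ∞ := by
      refine lintegral_eq_top_of_measure_eq_top_ne_zero (hf.pow_const s).aemeasurable ?_
      simpa [rpow_eq_top_iff_of_pos hs] using htop
    have hrhs : ∞ ≤ ∫⁻ t in Ioi (0 : ℝ),
        μ {x | ENNReal.ofReal t < f x} * ENNReal.ofReal (t ^ (s - 1)) :=
      calc ∞ = μ {x | f x = ∞} * ∫⁻ t in Ioi (0 : ℝ), ENNReal.ofReal (t ^ (s - 1)) := by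
            rw [lintegral_ofReal_rpow_Ioi_zero_eq_top, mul_top htop]
        _ ≤ ∫⁻ t in Ioi (0 : ℝ), μ {x | f x = ∞} * ENNReal.ofReal (t ^ (s - 1)) :=
            lintegral_const_mul_le _ _
        _ ≤ _ := by
            gcongr with t x
            exact fun hx => hx.symm ▸ ofReal_lt_top
    rw [hlhs, top_le_iff.1 hrhs, mul_top (ofReal_pos.2 hs).ne']

theorem lintegral_rpow_le_of_forall_mul_measure_lt_le {q : ℝ} (hq : 1 < q) {N : ℝ≥0∞}
    (hN : N ≠ ∞) {f g : α → ℝ≥0∞} (hf : Measurable f) (hg : Measurable g)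
    (hfg : ∀ t : ℝ≥0∞, t * μ {x | 2 * t < f x} ≤ N * ∫⁻ x in {x | t < g x}, g x ∂μ) :
    ∫⁻ x, f x ^ q ∂μ ≤
      2 ^ q * (ENNReal.ofReal q * (N * (ENNReal.ofReal (q - 1))⁻¹)) * ∫⁻ x, g x ^ q ∂μ := by
  have hq₁ : 0 < q - 1 := sub_pos.2 hq
  have hlevel (t : ℝ) (ht : 0 < t) :
      μ {x | ENNReal.ofReal t < f x / 2} * ENNReal.ofReal (t ^ (q - 1)) ≤
        N * (μ.withDensity g {x | ENNReal.ofReal t < g x} *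
          ENNReal.ofReal (t ^ (q - 1 - 1))) := by
    have hset : {x | ENNReal.ofReal t < f x / 2} = {x | 2 * ENNReal.ofReal t < f x} := by
      ext x
      simp only [mem_ofPred_eq, ENNReal.lt_div_iff_mul_lt (.inl two_ne_zero) (.inl ofNat_ne_top),
        mul_comm]
    have hpow : t ^ (q - 1) = t * t ^ (q - 1 - 1) := by
      rw [← Real.rpow_one_add' ht.le (by linarith)]; ring_nf
    rw [hset, hpow, ofReal_mul ht.le, withDensity_apply _ (measurableSet_lt measurable_const hg),
      ← mul_assoc, ← mul_assoc, mul_comm (μ _)]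
    exact mul_le_mul_left (hfg _) _
  have hgq : ∫⁻ x, g x ^ (q - 1) ∂μ.withDensity g = ∫⁻ x, g x ^ q ∂μ := by
    rw [lintegral_withDensity_eq_lintegral_mul _ hg (hg.pow_const _)]
    refine lintegral_congr fun x => ?_
    nth_rw 1 [Pi.mul_apply, ← rpow_one (g x), ← rpow_add_of_nonneg _ _ zero_le_one hq₁.le,
      add_sub_cancel]
  calc ∫⁻ x, f x ^ q ∂μ = 2 ^ q * ∫⁻ x, (f x / 2) ^ q ∂μ := by
        rw [← lintegral_const_mul _ ((hf.div_const 2).pow_const q)]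
        refine lintegral_congr fun x => ?_
        rw [← mul_rpow_of_nonneg _ _ (by linarith),
          ENNReal.mul_div_cancel two_ne_zero ofNat_ne_top]
    _ ≤ 2 ^ q * (ENNReal.ofReal q * ∫⁻ t in Ioi (0 : ℝ), N *
          (μ.withDensity g {x | ENNReal.ofReal t < g x} *
            ENNReal.ofReal (t ^ (q - 1 - 1)))) := by
        rw [lintegral_rpow_eq_lintegral_measure_ofReal_lt (hf.div_const 2) (by linarith)]
        gcongr 2 ^ q * (_ * ?_)
        exact setLIntegral_mono' measurableSet_Ioi hlevel
    _ = 2 ^ q * (ENNReal.ofReal q * (N * ((ENNReal.ofReal (q - 1))⁻¹ *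
          ∫⁻ x, g x ^ (q - 1) ∂μ.withDensity g))) := by
        rw [lintegral_rpow_eq_lintegral_measure_ofReal_lt hg hq₁, ← mul_assoc _⁻¹,
          ENNReal.inv_mul_cancel (ofReal_pos.2 hq₁).ne' ofReal_ne_top, one_mul,
          lintegral_const_mul' _ _ hN]
    _ = _ := by rw [hgq]; ring

end LayerCake

theorem laverage_le_laverage_indicator_add {α : Type*} [MeasurableSpace α] (μ : Measure α)
    (f : α → ℝ≥0∞) (t : ℝ≥0∞) :
    ⨍⁻ y, f y ∂μ ≤ ⨍⁻ y, {y | t < f y}.indicator f y ∂μ + t :=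
  calc ⨍⁻ y, f y ∂μ ≤ ⨍⁻ y, ({y | t < f y}.indicator f y + t) ∂μ := by
        refine laverage_mono_ae (ae_of_all _ fun y => ?_)
        by_cases hy : t < f y
        · simp [indicator, hy]
        · simpa [indicator, hy] using not_lt.1 hy
    _ = ⨍⁻ y, {y | t < f y}.indicator f y ∂μ + t * (μ univ / μ univ) := by
        rw [laverage_eq, laverage_eq, lintegral_add_right _ measurable_const, lintegral_const,
          ENNReal.add_div, mul_div_assoc]
    _ ≤ ⨍⁻ y, {y | t < f y}.indicator f y ∂μ + t := by
        gcongr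
        exact mul_le_of_le_one_right' ENNReal.div_self_le_one

section CenteredMaximal

variable {α : Type*} [PseudoMetricSpace α] [MeasurableSpace α] {μ : Measure α}

/-- The centred Hardy–Littlewood maximal function of `f` with respect to `μ`. Only dyadic radii are
used, which makes it a countable supremum; for doubling measures this changes it by a bounded
factor. -/
def centeredMaximal (μ : Measure α) (f : α → ℝ≥0∞) (x : α) : ℝ≥0∞ :=
  ⨆ k : ℤ, ⨍⁻ y in closedBall x ((2 : ℝ) ^ k), f y ∂μ

theorem setLAverage_closedBall_le_centeredMaximal (μ : Measure α) (f : α → ℝ≥0∞) (x : α) (k : ℤ) :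
    ⨍⁻ y in closedBall x ((2 : ℝ) ^ k), f y ∂μ ≤ centeredMaximal μ f x :=
  le_iSup (fun k : ℤ => ⨍⁻ y in closedBall x ((2 : ℝ) ^ k), f y ∂μ) k

theorem centeredMaximal_mono (μ : Measure α) : Monotone (centeredMaximal μ) :=
  fun _ _ h _ => iSup_mono fun _ => laverage_mono_ae (ae_of_all _ h)

theorem centeredMaximal_iSup (μ : Measure α) {f : ℕ → α → ℝ≥0∞} (hf : ∀ i, Measurable (f i))
    (hmono : Monotone f) : centeredMaximal μ (⨆ i, f i) = ⨆ i, centeredMaximal μ (f i) := by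
  ext x
  simp only [centeredMaximal, setLAverage_eq, iSup_apply, lintegral_iSup hf hmono,
    ENNReal.iSup_div]
  exact iSup_comm

theorem measurable_setLIntegral_closedBall [SecondCountableTopology α] [OpensMeasurableSpace α]
    [SFinite μ] {f : α → ℝ≥0∞} (hf : Measurable f) (r : ℝ) :
    Measurable fun x => ∫⁻ y in closedBall x r, f y ∂μ := by
  have hball : MeasurableSet {z : α × α | dist z.2 z.1 ≤ r} :=
    measurableSet_le (measurable_snd.dist measurable_fst) measurable_const
  simp_rw [← lintegral_indicator measurableSet_closedBall]
  exact ((hf.comp measurable_snd).indicator hball).lintegral_prod_right'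

theorem measurable_centeredMaximal [SecondCountableTopology α] [OpensMeasurableSpace α]
    [SFinite μ] {f : α → ℝ≥0∞} (hf : Measurable f) : Measurable (centeredMaximal μ f) := by
  refine Measurable.iSup fun k => ?_
  simp only [setLAverage_eq]
  have hvol := measurable_setLIntegral_closedBall (μ := μ) measurable_one ((2 : ℝ) ^ k)
  simp only [Pi.one_apply, setLIntegral_one] at hvol
  exact (measurable_setLIntegral_closedBall hf _).div hvol

theorem lt_centeredMaximal_indicator {f : α → ℝ≥0∞} {t : ℝ≥0∞} {x : α}
    (h : 2 * t < centeredMaximal μ f x) :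
    t < centeredMaximal μ ({y | t < f y}.indicator f) x := by
  obtain ⟨k, hk⟩ := lt_iSup_iff.1 h
  refine lt_of_lt_of_le ?_ (setLAverage_closedBall_le_centeredMaximal _ _ x k)
  exact lt_of_add_lt_add_right
    ((two_mul t ▸ hk).trans_le (laverage_le_laverage_indicator_add _ f t))

end CenteredMaximal

section Besicovitch

variable (α : Type*) [MetricSpace α] [SecondCountableTopology α] [MeasurableSpace α]
  [OpensMeasurableSpace α] [HasBesicovitchCovering α]

theorem exists_forall_mul_measure_le_mul_lintegral :
    ∃ N : ℕ, ∀ (μ : Measure α) (f : α → ℝ≥0∞) (t : ℝ≥0∞) (E : Set α) (r : α → ℝ) (R : ℝ),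
      (∀ x ∈ E, 0 < r x ∧ r x ≤ R ∧ t * μ (closedBall x (r x)) ≤
        ∫⁻ y in closedBall x (r x), f y ∂μ) → t * μ E ≤ N * ∫⁻ y, f y ∂μ := by
  obtain ⟨N, τ, hτ, hN⟩ := HasBesicovitchCovering.no_satelliteConfig (α := α)
  refine ⟨N, fun μ f t E r R hr => ?_⟩
  let balls : Besicovitch.BallPackage E α :=
    { c := fun x => x
      r := fun x => r x
      rpos := fun x => (hr x x.2).1
      r_bound := R
      r_le := fun x => (hr x x.2).2.1 }
  obtain ⟨s, hdisj, hcover⟩ := Besicovitch.exist_disjoint_covering_families hτ hN balls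
  have hcount (i : Fin N) : (s i).Countable :=
    (hdisj i).countable_of_nonempty_interior fun x _ =>
      ⟨x, ball_subset_interior_closedBall (mem_ball_self (balls.rpos x))⟩
  have hE : E ⊆ ⋃ i, ⋃ x ∈ s i, closedBall (x : α) (r x) := fun x hx => by
    have hmem : x ∈ ⋃ i, ⋃ x ∈ s i, ball (x : α) (r x) := hcover ⟨⟨x, hx⟩, rfl⟩
    refine iUnion_mono (fun i => iUnion₂_mono fun _ _ => ball_subset_closedBall) hmem
  have hfamily (i : Fin N) : t * μ (⋃ x ∈ s i, closedBall (x : α) (r x)) ≤ ∫⁻ y, f y ∂μ :=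
    calc t * μ (⋃ x ∈ s i, closedBall (x : α) (r x))
        ≤ t * ∑' x : s i, μ (closedBall (x : α) (r x)) := by
          gcongr
          exact measure_biUnion_le μ (hcount i) _
      _ ≤ ∑' x : s i, ∫⁻ y in closedBall (x : α) (r x), f y ∂μ := by
          rw [← ENNReal.tsum_mul_left]
          exact ENNReal.tsum_le_tsum fun x => (hr x x.1.2).2.2
      _ = ∫⁻ y in ⋃ x ∈ s i, closedBall (x : α) (r x), f y ∂μ :=
          (lintegral_biUnion (hcount i) (fun _ _ => measurableSet_closedBall) (hdisj i) _).symm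
      _ ≤ ∫⁻ y, f y ∂μ := setLIntegral_le_lintegral _ _
  calc t * μ E ≤ t * ∑ i, μ (⋃ x ∈ s i, closedBall (x : α) (r x)) := by
        gcongr
        exact (measure_mono hE).trans (measure_iUnion_fintype_le _ _)
    _ ≤ ∑ _i : Fin N, ∫⁻ y, f y ∂μ := by
        rw [Finset.mul_sum]
        exact Finset.sum_le_sum fun i _ => hfamily i
    _ = N * ∫⁻ y, f y ∂μ := by simp

theorem exists_mul_measure_lt_centeredMaximal_le :
    ∃ N : ℕ, ∀ (μ : Measure α) (f : α → ℝ≥0∞) (t : ℝ≥0∞),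
      t * μ {x | t < centeredMaximal μ f x} ≤ N * ∫⁻ x, f x ∂μ := by
  obtain ⟨N, hN⟩ := exists_forall_mul_measure_le_mul_lintegral α
  refine ⟨N, fun μ f t => ?_⟩
  let E (K : ℕ) : Set α :=
    {x | ∃ k : ℤ, k ≤ K ∧ t < ⨍⁻ y in closedBall x ((2 : ℝ) ^ k), f y ∂μ}
  have hE_mono : Monotone E := fun K L hKL x ⟨k, hk, hx⟩ =>
    ⟨k, hk.trans (by exact_mod_cast hKL), hx⟩
  have hE_iUnion : {x | t < centeredMaximal μ f x} = ⋃ K, E K := by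
    ext x
    simp only [centeredMaximal, mem_ofPred_eq, lt_iSup_iff, mem_iUnion, E]
    exact ⟨fun ⟨k, hk⟩ => ⟨k.toNat, k, Int.self_le_toNat k, hk⟩, fun ⟨_, k, _, hk⟩ => ⟨k, hk⟩⟩
  rw [hE_iUnion, hE_mono.measure_iUnion, ENNReal.mul_iSup]
  refine iSup_le fun K => ?_
  choose! k hkK hk using fun (x : α) (hx : x ∈ E K) => hx
  refine hN μ f t (E K) (fun x => (2 : ℝ) ^ k x) (2 ^ (K : ℤ)) fun x hx =>
    ⟨by positivity, zpow_le_zpow_right₀ one_le_two (hkK x hx), ?_⟩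
  exact ENNReal.mul_le_of_le_div (setLAverage_eq μ f _ ▸ (hk x hx).le)

theorem exists_lintegral_centeredMaximal_rpow_le {q : ℝ} (hq : 1 < q) :
    ∃ C ≠ ∞, ∀ (μ : Measure α) [SFinite μ] (f : α → ℝ≥0∞), Measurable f →
      ∫⁻ x, centeredMaximal μ f x ^ q ∂μ ≤ C * ∫⁻ x, f x ^ q ∂μ := by
  obtain ⟨N, hN⟩ := exists_mul_measure_lt_centeredMaximal_le α
  have hq₁ : ENNReal.ofReal (q - 1) ≠ 0 := (ofReal_pos.2 (sub_pos.2 hq)).ne'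
  refine ⟨2 ^ q * (ENNReal.ofReal q * (N * (ENNReal.ofReal (q - 1))⁻¹)), by finiteness,
    fun μ _ f hf => lintegral_rpow_le_of_forall_mul_measure_lt_le hq (natCast_ne_top N)
      (measurable_centeredMaximal hf) hf fun t => ?_⟩
  calc t * μ {x | 2 * t < centeredMaximal μ f x}
      ≤ t * μ {x | t < centeredMaximal μ ({y | t < f y}.indicator f) x} :=
        mul_le_mul_right (measure_mono fun x hx => lt_centeredMaximal_indicator hx) t
    _ ≤ N * ∫⁻ x, {y | t < f y}.indicator f x ∂μ := hN _ _ _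
    _ = N * ∫⁻ x in {x | t < f x}, f x ∂μ := by
        rw [lintegral_indicator (measurableSet_lt measurable_const hf)]

theorem exists_lintegral_mul_centeredMaximal_withDensity_rpow_le {q : ℝ} (hq : 1 < q) :
    ∃ C ≠ ∞, ∀ (μ : Measure α) [SFinite μ] (w f : α → ℝ≥0∞), Measurable w → Measurable f →
      ∫⁻ x, w x * centeredMaximal (μ.withDensity w) f x ^ q ∂μ ≤ C * ∫⁻ x, w x * f x ^ q ∂μ := by
  obtain ⟨C, hC, hstrong⟩ := exists_lintegral_centeredMaximal_rpow_le α hq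
  refine ⟨C, hC, fun μ _ w f hw hf => ?_⟩
  have hbound := hstrong (μ.withDensity w) f hf
  rwa [lintegral_withDensity_eq_lintegral_mul _ hw ((measurable_centeredMaximal hf).pow_const q),
    lintegral_withDensity_eq_lintegral_mul _ hw (hf.pow_const q)] at hbound

end Besicovitch

theorem setLIntegral_ne_zero_of_ae_ne_zero {α : Type*} [MeasurableSpace α] {μ : Measure α}
    {f : α → ℝ≥0∞} (hf : Measurable f) (hf₀ : ∀ᵐ x ∂μ, f x ≠ 0) {s : Set α} (hs : μ s ≠ 0) :
    ∫⁻ x in s, f x ∂μ ≠ 0 := by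
  have : (ae (μ.restrict s)).NeBot := ae_neBot.2 (mt Measure.restrict_eq_zero.1 hs)
  intro hzero
  obtain ⟨x, hx, hx₀⟩ :=
    (((lintegral_eq_zero_iff hf).1 hzero).and (ae_restrict_of_ae hf₀)).exists
  exact hx₀ hx

theorem setLIntegral_div_le_mul_setLAverage {α : Type*} [MeasurableSpace α] {μ : Measure α}
    {s t : Set α} {D : ℝ≥0∞} (hD : μ t ≤ D * μ s) (ht₀ : μ t ≠ 0) (ht : μ t ≠ ∞) (f : α → ℝ≥0∞) :
    (∫⁻ x in t, f x ∂μ) / μ s ≤ D * ⨍⁻ x in t, f x ∂μ := by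
  have hinv : (μ s)⁻¹ ≤ D / μ t := by
    rw [← ENNReal.inv_div (.inr ht) (.inr ht₀), ENNReal.inv_le_inv]
    exact ENNReal.div_le_of_le_mul' hD
  calc (∫⁻ x in t, f x ∂μ) * (μ s)⁻¹ ≤ (∫⁻ x in t, f x ∂μ) * (D / μ t) := by gcongr
    _ = D * ⨍⁻ x in t, f x ∂μ := by rw [setLAverage_eq]; simp only [div_eq_mul_inv]; ring

theorem setLAverage_le_mul_setLAverage {α : Type*} [MeasurableSpace α] {μ : Measure α} {s t : Set α}
    {D : ℝ≥0∞} (hst : s ⊆ t) (hD : μ t ≤ D * μ s) (ht₀ : μ t ≠ 0) (ht : μ t ≠ ∞)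
    (f : α → ℝ≥0∞) : ⨍⁻ x in s, f x ∂μ ≤ D * ⨍⁻ x in t, f x ∂μ := by
  refine le_trans ?_ (setLIntegral_div_le_mul_setLAverage hD ht₀ ht f)
  rw [setLAverage_eq]
  exact ENNReal.div_le_div_right (lintegral_mono_set hst) _

section Doubling

/-- `μ` is doubling at all scales, unlike in `IsUnifLocDoublingMeasure`, which concerns small balls
only. -/
def IsDoubling {α : Type*} [PseudoMetricSpace α] [MeasurableSpace α] (μ : Measure α) : Prop :=
  ∃ D ≠ ∞, ∀ x r, 0 < r → μ (closedBall x (2 * r)) ≤ D * μ (closedBall x r)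

theorem isDoubling_of_isAddHaarMeasure {E : Type*} [NormedAddCommGroup E] [NormedSpace ℝ E]
    [FiniteDimensional ℝ E] [MeasurableSpace E] [BorelSpace E] (μ : Measure E)
    [μ.IsAddHaarMeasure] : IsDoubling μ := by
  refine ⟨ENNReal.ofReal (2 ^ Module.finrank ℝ E), ofReal_ne_top, fun x r hr => ?_⟩
  rw [μ.addHaar_closedBall_mul x zero_le_two hr.le, μ.addHaar_closedBall_center x r]

variable {α : Type*} [MeasurableSpace α]

theorem IsDoubling.exists_measure_closedBall_two_pow_mul_le [PseudoMetricSpace α] {μ : Measure α}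
    (hμ : IsDoubling μ) (m : ℕ) :
    ∃ D ≠ ∞, ∀ x r, 0 < r → μ (closedBall x (2 ^ m * r)) ≤ D * μ (closedBall x r) := by
  obtain ⟨D, hD, hdouble⟩ := hμ
  refine ⟨D ^ m, by finiteness, fun x r hr => ?_⟩
  induction m with
  | zero => simp
  | succ m ih =>
    calc μ (closedBall x (2 ^ (m + 1) * r)) = μ (closedBall x (2 * (2 ^ m * r))) := by ring_nf
      _ ≤ D * μ (closedBall x (2 ^ m * r)) := hdouble _ _ (by positivity)
      _ ≤ D * (D ^ m * μ (closedBall x r)) := by gcongr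
      _ = D ^ (m + 1) * μ (closedBall x r) := by ring

theorem IsDoubling.exists_setLAverage_closedBall_le_mul_centeredMaximal [PseudoMetricSpace α]
    [ProperSpace α] {μ : Measure α} [μ.IsOpenPosMeasure] [IsFiniteMeasureOnCompacts μ]
    (hμ : IsDoubling μ) :
    ∃ D ≠ ∞, ∀ (f : α → ℝ≥0∞) (c : α) (r : ℝ), 0 < r → ∀ x ∈ closedBall c r,
      ⨍⁻ y in closedBall c r, f y ∂μ ≤ D * centeredMaximal μ f x := by
  obtain ⟨D, hD, hdouble⟩ := hμ.exists_measure_closedBall_two_pow_mul_le 3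
  refine ⟨D, hD, fun f c r hr x hx => ?_⟩
  rw [mem_closedBall] at hx
  obtain ⟨k, hk, hk'⟩ := exists_mem_Ioc_zpow (by positivity : 0 < 2 * r) one_lt_two
  have hk'' : (2 : ℝ) ^ (k + 1) = 2 ^ k * 2 := zpow_add_one₀ two_ne_zero k
  have hpos : (0 : ℝ) < 2 ^ (k + 1) := by positivity
  refine (setLAverage_le_mul_setLAverage (t := closedBall x ((2 : ℝ) ^ (k + 1))) ?_ ?_
    (measure_closedBall_pos μ x hpos).ne' measure_closedBall_lt_top.ne f).trans
    (mul_le_mul_right (setLAverage_closedBall_le_centeredMaximal μ f x (k + 1)) D)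
  · exact closedBall_subset_closedBall' (by rw [dist_comm]; linarith)
  · refine (measure_mono (closedBall_subset_closedBall' ?_)).trans (hdouble c r hr)
    linarith

end Doubling

theorem setLIntegral_div_withDensity {α : Type*} [MeasurableSpace α] {μ : Measure α}
    {w f : α → ℝ≥0∞} (hw : Measurable w) (hw' : ∀ᵐ x ∂μ, w x ≠ 0 ∧ w x ≠ ∞) (hf : Measurable f)
    {s : Set α} (hs : MeasurableSet s) :
    ∫⁻ x in s, f x / w x ∂μ.withDensity w = ∫⁻ x in s, f x ∂μ := by
  have hdens := setLIntegral_withDensity_eq_setLIntegral_mul μ hw (hf.div hw) hs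
  refine hdens.trans (setLIntegral_congr_fun_ae hs (hw'.mono fun x hx _ => ?_))
  exact ENNReal.mul_div_cancel hx.1 hx.2

theorem setLIntegral_closedBall_div_le_centeredMaximal {α : Type*} [PseudoMetricSpace α]
    [MeasurableSpace α] (μ : Measure α) (f : α → ℝ≥0∞) {x y : α} {k : ℤ}
    (hy : y ∈ closedBall x ((2 : ℝ) ^ k)) :
    (∫⁻ z in closedBall x ((2 : ℝ) ^ k), f z ∂μ) / μ (closedBall x (4 * (2 : ℝ) ^ k)) ≤
      centeredMaximal μ f y := by
  have hk : (2 : ℝ) ^ (k + 1) = 2 ^ k * 2 := zpow_add_one₀ two_ne_zero k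
  have hdist := mem_closedBall.1 hy
  refine le_trans ?_ (setLAverage_closedBall_le_centeredMaximal μ f y (k + 1))
  rw [setLAverage_eq]
  refine ENNReal.div_le_div (lintegral_mono_set (closedBall_subset_closedBall' ?_))
    (measure_mono (closedBall_subset_closedBall' ?_))
  · rw [dist_comm]; linarith
  · have : (0 : ℝ) < 2 ^ k := by positivity
    linarith

section MuckenhouptPair

variable {p q : ℝ}

theorem ne_zero_and_ne_top_of_rpow_inv_mul_rpow_inv_eq_one (hpq : p.HolderConjugate q)
    {a b : ℝ≥0∞} (h : a ^ p⁻¹ * b ^ q⁻¹ = 1) : a ≠ 0 ∧ a ≠ ∞ := by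
  have hp := inv_pos.2 hpq.pos
  refine ⟨?_, ?_⟩ <;> rintro rfl
  · simp [zero_rpow_of_pos hp] at h
  · rw [top_rpow_of_pos hp] at h
    rcases eq_or_ne (b ^ q⁻¹) 0 with hb | hb <;> simp [hb, top_mul] at h

theorem mul_div_rpow_eq_mul_rpow (hpq : p.HolderConjugate q) {a b : ℝ≥0∞}
    (h : a ^ p⁻¹ * b ^ q⁻¹ = 1) (x : ℝ≥0∞) : a * (x / a) ^ q = b * x ^ q := by
  obtain ⟨ha₀, ha⟩ := ne_zero_and_ne_top_of_rpow_inv_mul_rpow_inv_eq_one hpq h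
  have hq := hpq.symm.pos
  have hb : b = a ^ (1 - q) :=
    calc b = (b ^ q⁻¹) ^ q := by rw [← rpow_mul, inv_mul_cancel₀ hq.ne', rpow_one]
      _ = ((a ^ p⁻¹)⁻¹) ^ q := by rw [ENNReal.eq_inv_of_mul_eq_one_left ((mul_comm _ _).trans h)]
      _ = a ^ (1 - q) := by
        rw [← rpow_neg, ← rpow_mul, neg_mul, inv_mul_eq_div, hpq.symm.div_conj_eq_sub_one, neg_sub]
  rw [hb, div_eq_mul_inv, mul_rpow_of_nonneg _ _ hq.le, inv_rpow, sub_eq_add_neg,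
    rpow_add _ _ ha₀ ha, rpow_one, rpow_neg]
  ring

/-- A pair of dual weights on a metric measure space: `w ^ (1 / p) * σ ^ (1 / q) = 1` almost
everywhere, so that `σ = w ^ (1 - q)` and `w = σ ^ (1 - p)`, and the `A_p` condition holds on balls.
Taking the `p`-th root of the latter makes the definition symmetric in `(p, w)` and `(q, σ)`. -/
structure MuckenhouptPair {α : Type*} [PseudoMetricSpace α] [MeasurableSpace α] (μ : Measure α)
    (p q : ℝ) (w σ : α → ℝ≥0∞) : Prop where
  holderConjugate : p.HolderConjugate q
  measurable_left : Measurable w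
  measurable_right : Measurable σ
  rpow_inv_mul_rpow_inv : ∀ᵐ x ∂μ, w x ^ p⁻¹ * σ x ^ q⁻¹ = 1
  exists_setLAverage_le : ∃ K ≠ ∞, ∀ x r, 0 < r →
    (⨍⁻ y in closedBall x r, w y ∂μ) ^ p⁻¹ * (⨍⁻ y in closedBall x r, σ y ∂μ) ^ q⁻¹ ≤ K

namespace MuckenhouptPair

section PseudoMetricSpace

variable {α : Type*} [PseudoMetricSpace α] [MeasurableSpace α] {μ : Measure α} {w σ : α → ℝ≥0∞}

protected theorem symm (h : MuckenhouptPair μ p q w σ) : MuckenhouptPair μ q p σ w where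
  holderConjugate := h.holderConjugate.symm
  measurable_left := h.measurable_right
  measurable_right := h.measurable_left
  rpow_inv_mul_rpow_inv := by simpa only [mul_comm] using h.rpow_inv_mul_rpow_inv
  exists_setLAverage_le := by simpa only [mul_comm] using h.exists_setLAverage_le

theorem ae_ne_zero_and_ne_top (h : MuckenhouptPair μ p q w σ) : ∀ᵐ x ∂μ, w x ≠ 0 ∧ w x ≠ ∞ :=
  h.rpow_inv_mul_rpow_inv.mono fun _ =>
    ne_zero_and_ne_top_of_rpow_inv_mul_rpow_inv_eq_one h.holderConjugate

theorem setLIntegral_ne_zero (h : MuckenhouptPair μ p q w σ) {s : Set α} (hs : μ s ≠ 0) :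
    ∫⁻ x in s, w x ∂μ ≠ 0 :=
  setLIntegral_ne_zero_of_ae_ne_zero h.measurable_left
    (h.ae_ne_zero_and_ne_top.mono fun _ hx => hx.1) hs

theorem setLIntegral_closedBall_ne_top [ProperSpace α] [μ.IsOpenPosMeasure]
    [IsFiniteMeasureOnCompacts μ] (h : MuckenhouptPair μ p q w σ) (x : α) {r : ℝ} (hr : 0 < r) :
    ∫⁻ y in closedBall x r, w y ∂μ ≠ ∞ := by
  obtain ⟨K, hK, hbound⟩ := h.exists_setLAverage_le
  have hμ : μ (closedBall x r) ≠ ∞ := measure_closedBall_lt_top.ne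
  have hσ := h.symm.setLIntegral_ne_zero (measure_closedBall_pos μ x hr).ne'
  intro htop
  refine hK (top_le_iff.1 (le_trans (le_of_eq ?_) (hbound x r hr)))
  rw [setLAverage_eq, setLAverage_eq, htop, top_div_of_ne_top hμ,
    top_rpow_of_pos (inv_pos.2 h.holderConjugate.pos), top_mul]
  have hq := inv_pos.2 h.holderConjugate.symm.pos
  simp [rpow_eq_zero_iff_of_pos hq, ENNReal.div_eq_zero_iff, hσ, hμ]

theorem exists_setLAverage_mul_rpow_le [ProperSpace α] [μ.IsOpenPosMeasure]
    [IsFiniteMeasureOnCompacts μ] (hμ : IsDoubling μ) (h : MuckenhouptPair μ p q w σ) :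
    ∃ K ≠ ∞, ∀ x r, 0 < r → (⨍⁻ y in closedBall x r, w y ∂μ) *
      ((∫⁻ y in closedBall x (4 * r), σ y ∂μ) / μ (closedBall x r)) ^ (p - 1) ≤ K := by
  obtain ⟨K, hK, hbound⟩ := h.exists_setLAverage_le
  obtain ⟨D, hD, hdouble⟩ := hμ.exists_measure_closedBall_two_pow_mul_le 2
  have hpq := h.holderConjugate
  have hp₁ := hpq.sub_one_pos.le
  refine ⟨D * D ^ (p - 1) * K ^ p, by have := hpq.pos.le; finiteness, fun x r hr => ?_⟩
  have hB₄ : μ (closedBall x (4 * r)) ≤ D * μ (closedBall x r) := by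
    simpa only [show (2 : ℝ) ^ 2 = 4 by norm_num] using hdouble x r hr
  have hpos := (measure_closedBall_pos μ x (by positivity : 0 < 4 * r)).ne'
  have hsub : closedBall x r ⊆ closedBall x (4 * r) := closedBall_subset_closedBall (by linarith)
  have hfin : μ (closedBall x (4 * r)) ≠ ∞ := measure_closedBall_lt_top.ne
  have hw := setLAverage_le_mul_setLAverage hsub hB₄ hpos hfin w
  have hσ : (∫⁻ y in closedBall x (4 * r), σ y ∂μ) / μ (closedBall x r) ≤
      D * ⨍⁻ y in closedBall x (4 * r), σ y ∂μ :=
    setLIntegral_div_le_mul_setLAverage hB₄ hpos hfin σ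
  calc (⨍⁻ y in closedBall x r, w y ∂μ) *
        ((∫⁻ y in closedBall x (4 * r), σ y ∂μ) / μ (closedBall x r)) ^ (p - 1)
      ≤ (D * ⨍⁻ y in closedBall x (4 * r), w y ∂μ) *
        (D * ⨍⁻ y in closedBall x (4 * r), σ y ∂μ) ^ (p - 1) := by gcongr
    _ = D * D ^ (p - 1) * ((⨍⁻ y in closedBall x (4 * r), w y ∂μ) ^ p⁻¹ *
        (⨍⁻ y in closedBall x (4 * r), σ y ∂μ) ^ q⁻¹) ^ p := by
        rw [mul_rpow_of_nonneg _ _ hp₁, mul_rpow_of_nonneg _ _ hpq.pos.le, ← rpow_mul, ← rpow_mul,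
          inv_mul_cancel₀ hpq.ne_zero, rpow_one, inv_mul_eq_div, hpq.div_conj_eq_sub_one]
        ring
    _ ≤ D * D ^ (p - 1) * K ^ p := by
        have := hpq.pos.le
        gcongr
        exact hbound x _ (by positivity)

end PseudoMetricSpace

variable {α : Type*} [MetricSpace α] [ProperSpace α] [MeasurableSpace α] [BorelSpace α]
  {μ : Measure α} [μ.IsOpenPosMeasure] [IsFiniteMeasureOnCompacts μ] {w σ : α → ℝ≥0∞}

theorem setLAverage_mul_setLAverage_div_withDensity (h : MuckenhouptPair μ p q w σ) {g : α → ℝ≥0∞}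
    (hg : Measurable g) (x : α) {r : ℝ} (hr : 0 < r) :
    (⨍⁻ y in closedBall x r, w y ∂μ) * ⨍⁻ y in closedBall x r, g y / w y ∂μ.withDensity w =
      ⨍⁻ y in closedBall x r, g y ∂μ := by
  have hw₀ := h.setLIntegral_ne_zero (measure_closedBall_pos μ x hr).ne'
  have hw := h.setLIntegral_closedBall_ne_top x hr
  rw [setLAverage_eq, setLAverage_eq, setLAverage_eq, withDensity_apply _ measurableSet_closedBall,
    setLIntegral_div_withDensity h.measurable_left h.ae_ne_zero_and_ne_top hg
      measurableSet_closedBall, mul_comm, ← mul_div_assoc, ENNReal.div_mul_cancel hw₀ hw]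

theorem setLAverage_rpow_le_mul_setLAverage_rpow (h : MuckenhouptPair μ p q w σ)
    {f : α → ℝ≥0∞} (hf : Measurable f) (x : α) (k : ℤ) :
    (⨍⁻ y in closedBall x ((2 : ℝ) ^ k), f y ∂μ) ^ (p - 1) ≤
      ((∫⁻ y in closedBall x (4 * (2 : ℝ) ^ k), σ y ∂μ) /
          μ (closedBall x ((2 : ℝ) ^ k))) ^ (p - 1) *
        ⨍⁻ y in closedBall x ((2 : ℝ) ^ k),
          centeredMaximal (μ.withDensity σ) (f / σ) y ^ (p - 1) ∂μ := by
  have hp₁ := h.holderConjugate.sub_one_pos.le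
  set B := closedBall x ((2 : ℝ) ^ k)
  set S := ∫⁻ y in closedBall x (4 * (2 : ℝ) ^ k), σ y ∂μ with hS
  have hS₀ : S ≠ 0 :=
    h.symm.setLIntegral_ne_zero (measure_closedBall_pos μ x (by positivity)).ne'
  have hS_top : S ≠ ∞ := h.symm.setLIntegral_closedBall_ne_top x (by positivity)
  have hlower (y : α) (hy : y ∈ B) : (∫⁻ z in B, f z ∂μ) / S ≤
      centeredMaximal (μ.withDensity σ) (f / σ) y := by
    rw [hS, ← setLIntegral_div_withDensity h.measurable_right h.symm.ae_ne_zero_and_ne_top hf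
      measurableSet_closedBall, ← withDensity_apply σ measurableSet_closedBall]
    exact setLIntegral_closedBall_div_le_centeredMaximal _ _ hy
  calc (⨍⁻ y in B, f y ∂μ) ^ (p - 1)
      = (S / μ B) ^ (p - 1) * ((∫⁻ y in B, f y ∂μ) / S) ^ (p - 1) := by
        rw [← mul_rpow_of_nonneg _ _ hp₁, setLAverage_eq, mul_comm, ← mul_div_assoc,
          ENNReal.div_mul_cancel hS₀ hS_top]
    _ = (S / μ B) ^ (p - 1) * ⨍⁻ _y in B, ((∫⁻ y in B, f y ∂μ) / S) ^ (p - 1) ∂μ := by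
        rw [setLAverage_const (measure_closedBall_pos μ x (by positivity)).ne'
          measure_closedBall_lt_top.ne]
    _ ≤ (S / μ B) ^ (p - 1) * ⨍⁻ y in B,
          centeredMaximal (μ.withDensity σ) (f / σ) y ^ (p - 1) ∂μ := by
        refine mul_le_mul_right (laverage_mono_ae ?_) _
        exact ae_restrict_of_forall_mem measurableSet_closedBall fun y hy =>
          rpow_le_rpow (hlower y hy) hp₁

theorem exists_centeredMaximal_rpow_le (hμ : IsDoubling μ) (h : MuckenhouptPair μ p q w σ) :
    ∃ K ≠ ∞, ∀ f : α → ℝ≥0∞, Measurable f → ∀ x, centeredMaximal μ f x ^ (p - 1) ≤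
      K * centeredMaximal (μ.withDensity w) (fun y =>
        centeredMaximal (μ.withDensity σ) (f / σ) y ^ (p - 1) / w y) x := by
  obtain ⟨K, hK, hbound⟩ := h.exists_setLAverage_mul_rpow_le hμ
  have hp₁ := h.holderConjugate.sub_one_pos
  refine ⟨K, hK, fun f hf x => ?_⟩
  have hH := measurable_centeredMaximal (μ := μ.withDensity σ) (hf.div h.measurable_right)
  rw [← ENNReal.le_rpow_inv_iff hp₁]
  refine iSup_le fun k => (ENNReal.le_rpow_inv_iff hp₁).2 ?_
  have hk : (0 : ℝ) < 2 ^ k := by positivity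
  refine (h.setLAverage_rpow_le_mul_setLAverage_rpow hf x k).trans ?_
  rw [← h.setLAverage_mul_setLAverage_div_withDensity (hH.pow_const (p - 1)) x hk, ← mul_assoc,
    mul_comm (_ ^ (p - 1))]
  exact mul_le_mul' (hbound x _ hk) (setLAverage_closedBall_le_centeredMaximal _ _ x k)

theorem exists_lintegral_mul_centeredMaximal_rpow_le [HasBesicovitchCovering α]
    (hμ : IsDoubling μ) (h : MuckenhouptPair μ p q w σ) :
    ∃ C ≠ ∞, ∀ f : α → ℝ≥0∞, Measurable f →
      ∫⁻ x, w x * centeredMaximal μ f x ^ p ∂μ ≤ C * ∫⁻ x, w x * f x ^ p ∂μ := by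
  have hpq := h.holderConjugate
  have hw := h.measurable_left
  have hσ := h.measurable_right
  have hq := hpq.symm.pos.le
  obtain ⟨K, hK, hlerner⟩ := h.exists_centeredMaximal_rpow_le hμ
  obtain ⟨C₁, hC₁, hstrong_q⟩ :=
    exists_lintegral_mul_centeredMaximal_withDensity_rpow_le α hpq.symm.lt
  obtain ⟨C₂, hC₂, hstrong_p⟩ :=
    exists_lintegral_mul_centeredMaximal_withDensity_rpow_le α hpq.lt
  refine ⟨K ^ q * C₁ * C₂, by finiteness, fun f hf => ?_⟩
  set H := centeredMaximal (μ.withDensity σ) (f / σ)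
  have hH : Measurable H := measurable_centeredMaximal (hf.div hσ)
  set g := fun y => H y ^ (p - 1) / w y
  have hg : Measurable g := (hH.pow_const _).div hw
  set G := centeredMaximal (μ.withDensity w) g
  have hlerner_q (x : α) : centeredMaximal μ f x ^ p ≤ K ^ q * G x ^ q := by
    rw [← mul_rpow_of_nonneg _ _ hq, ← hpq.sub_one_mul_conj, rpow_mul]
    exact rpow_le_rpow (hlerner f hf x) hq
  calc ∫⁻ x, w x * centeredMaximal μ f x ^ p ∂μ
      ≤ ∫⁻ x, K ^ q * (w x * G x ^ q) ∂μ := by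
        refine lintegral_mono fun x => ?_
        rw [mul_left_comm]
        exact mul_le_mul_right (hlerner_q x) _
    _ = K ^ q * ∫⁻ x, w x * G x ^ q ∂μ := lintegral_const_mul' _ _ (by finiteness)
    _ ≤ K ^ q * (C₁ * ∫⁻ x, w x * g x ^ q ∂μ) := mul_le_mul_right (hstrong_q μ w g hw hg) _
    _ = K ^ q * C₁ * ∫⁻ x, σ x * H x ^ p ∂μ := by
        rw [← mul_assoc]
        congr 1
        refine lintegral_congr_ae (h.rpow_inv_mul_rpow_inv.mono fun x hx => ?_)
        simp only [g, mul_div_rpow_eq_mul_rpow hpq hx, ← rpow_mul, hpq.sub_one_mul_conj]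
    _ ≤ K ^ q * C₁ * (C₂ * ∫⁻ x, σ x * (f x / σ x) ^ p ∂μ) :=
        mul_le_mul_right (hstrong_p μ σ (f / σ) hσ (hf.div hσ)) _
    _ = K ^ q * C₁ * C₂ * ∫⁻ x, w x * f x ^ p ∂μ := by
        rw [← mul_assoc]
        congr 1
        refine lintegral_congr_ae (h.symm.rpow_inv_mul_rpow_inv.mono fun x hx => ?_)
        exact mul_div_rpow_eq_mul_rpow hpq.symm hx (f x)

end MuckenhouptPair

end MuckenhouptPair

section RubioDeFrancia

variable {α : Type*}

/-- The partial sums of the Rubio de Francia series of `G`, as fixed point iterates from `0`: for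
linear `T`, the `i`-th one is `∑ j < i, D⁻ʲ Tʲ G`. -/
def rubioDeFranciaIterate (T : (α → ℝ≥0∞) → α → ℝ≥0∞) (D : ℝ≥0∞) (G : α → ℝ≥0∞) (i : ℕ) :
    α → ℝ≥0∞ :=
  (fun H => G + D⁻¹ • T H)^[i] 0

theorem rubioDeFranciaIterate_succ (T : (α → ℝ≥0∞) → α → ℝ≥0∞) (D : ℝ≥0∞) (G : α → ℝ≥0∞) (i : ℕ) :
    rubioDeFranciaIterate T D G (i + 1) = G + D⁻¹ • T (rubioDeFranciaIterate T D G i) :=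
  Function.iterate_succ_apply' _ i 0

variable [MeasurableSpace α] {μ : Measure α}

/-- The operators on nonnegative functions to which the Rubio de Francia iteration applies:
monotone, bounded on `L¹(μ)` and continuous along increasing sequences. Subadditivity is not
required. -/
structure IsIterableOperator (μ : Measure α) (T : (α → ℝ≥0∞) → α → ℝ≥0∞) : Prop where
  monotone : Monotone T
  measurable : ∀ F, Measurable F → Measurable (T F)
  map_iSup : ∀ F : ℕ → α → ℝ≥0∞, (∀ i, Measurable (F i)) → Monotone F →
    T (⨆ i, F i) = ⨆ i, T (F i)
  exists_lintegral_le : ∃ C ≠ ∞, ∀ F, Measurable F → ∫⁻ x, T F x ∂μ ≤ C * ∫⁻ x, F x ∂μ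

namespace IsIterableOperator

variable {S T : (α → ℝ≥0∞) → α → ℝ≥0∞}

protected theorem add (hS : IsIterableOperator μ S) (hT : IsIterableOperator μ T) :
    IsIterableOperator μ (S + T) where
  monotone := hS.monotone.add hT.monotone
  measurable F hF := (hS.measurable F hF).add (hT.measurable F hF)
  map_iSup F hF hmono := by
    ext x
    simp only [Pi.add_apply, hS.map_iSup F hF hmono, hT.map_iSup F hF hmono, iSup_apply]
    exact ENNReal.iSup_add_iSup_of_monotone (fun i j hij => hS.monotone (hmono hij) x)
      fun i j hij => hT.monotone (hmono hij) x
  exists_lintegral_le := by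
    obtain ⟨C, hC, hSC⟩ := hS.exists_lintegral_le
    obtain ⟨C', hC', hTC⟩ := hT.exists_lintegral_le
    refine ⟨C + C', by finiteness, fun F hF => ?_⟩
    simp only [Pi.add_apply, lintegral_add_left (hS.measurable F hF), add_mul]
    exact add_le_add (hSC F hF) (hTC F hF)

theorem monotone_rubioDeFranciaIterate (hT : IsIterableOperator μ T) (D : ℝ≥0∞) (G : α → ℝ≥0∞) :
    Monotone (rubioDeFranciaIterate T D G) := by
  have hstep : Monotone fun H => G + D⁻¹ • T H := fun H H' hH x => by
    simp only [Pi.add_apply, Pi.smul_apply]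
    gcongr
    exact hT.monotone hH x
  exact hstep.monotone_iterate_of_le_map fun x => zero_le

theorem measurable_rubioDeFranciaIterate (hT : IsIterableOperator μ T) (D : ℝ≥0∞) {G : α → ℝ≥0∞}
    (hG : Measurable G) (i : ℕ) : Measurable (rubioDeFranciaIterate T D G i) := by
  induction i with
  | zero => exact measurable_zero
  | succ i ih =>
    rw [rubioDeFranciaIterate_succ]
    exact hG.add ((hT.measurable _ ih).const_smul _)

theorem lintegral_rubioDeFranciaIterate_le (hT : IsIterableOperator μ T) {D : ℝ≥0∞} (hD₀ : D ≠ 0)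
    (hD : D ≠ ∞) (hTD : ∀ F, Measurable F → 2 * ∫⁻ x, T F x ∂μ ≤ D * ∫⁻ x, F x ∂μ)
    {G : α → ℝ≥0∞} (hG : Measurable G) (i : ℕ) :
    ∫⁻ x, rubioDeFranciaIterate T D G i x ∂μ ≤ 2 * ∫⁻ x, G x ∂μ := by
  induction i with
  | zero => simp [rubioDeFranciaIterate]
  | succ i ih =>
    have hF := hT.measurable_rubioDeFranciaIterate D hG i
    set F := rubioDeFranciaIterate T D G i
    have hTF : ∫⁻ x, T F x ∂μ ≤ D * ∫⁻ x, G x ∂μ := by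
      refine (ENNReal.mul_le_mul_iff_right two_ne_zero ofNat_ne_top).1 ((hTD F hF).trans ?_)
      exact (mul_le_mul_right ih D).trans_eq (mul_left_comm _ _ _)
    calc ∫⁻ x, rubioDeFranciaIterate T D G (i + 1) x ∂μ
        = ∫⁻ x, G x ∂μ + D⁻¹ * ∫⁻ x, T F x ∂μ := by
          simp only [rubioDeFranciaIterate_succ, Pi.add_apply, Pi.smul_apply, smul_eq_mul,
            lintegral_add_left hG, lintegral_const_mul _ (hT.measurable F hF), F]
      _ ≤ ∫⁻ x, G x ∂μ + D⁻¹ * (D * ∫⁻ x, G x ∂μ) := by gcongr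
      _ = 2 * ∫⁻ x, G x ∂μ := by rw [ENNReal.inv_mul_cancel_left hD₀ hD, two_mul]

theorem exists_forall_exists_le_and_apply_le_smul (hT : IsIterableOperator μ T) :
    ∃ D ≠ ∞, ∀ G, Measurable G → ∃ F, Measurable F ∧ G ≤ F ∧
      ∫⁻ x, F x ∂μ ≤ 2 * ∫⁻ x, G x ∂μ ∧ T F ≤ D • F := by
  obtain ⟨C, hC, hTC⟩ := hT.exists_lintegral_le
  let D : ℝ≥0∞ := 2 * (C + 1)
  have hD₀ : D ≠ 0 := by simp [D]
  have hD : D ≠ ∞ := by finiteness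
  have hTD (F : α → ℝ≥0∞) (hF : Measurable F) : 2 * ∫⁻ x, T F x ∂μ ≤ D * ∫⁻ x, F x ∂μ := by
    rw [mul_assoc]
    gcongr
    exact (hTC F hF).trans (mul_le_mul_left le_self_add _)
  refine ⟨D, hD, fun G hG => ?_⟩
  have hF := hT.measurable_rubioDeFranciaIterate D hG
  have hF_mono := hT.monotone_rubioDeFranciaIterate D G
  have hF_int := hT.lintegral_rubioDeFranciaIterate_le hD₀ hD hTD hG
  have hF_succ (i : ℕ) := rubioDeFranciaIterate_succ T D G i
  set F := rubioDeFranciaIterate T D G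
  have hsup : ⨆ i, F i = fun x => ⨆ i, F i x := funext fun x => iSup_apply
  refine ⟨⨆ i, F i, hsup ▸ .iSup hF, le_iSup_of_le 1 (hF_succ 0 ▸ fun x => le_self_add), ?_, ?_⟩
  · simpa only [iSup_apply, lintegral_iSup hF hF_mono] using iSup_le hF_int
  · rw [hT.map_iSup F hF hF_mono]
    refine iSup_le fun i x => ?_
    calc T (F i) x = D * (D⁻¹ * T (F i) x) := by rw [ENNReal.mul_inv_cancel_left hD₀ hD]
      _ ≤ D * F (i + 1) x := by
          rw [hF_succ]
          exact mul_le_mul_right (show _ ≤ G x + D⁻¹ * T (F i) x from le_add_self) D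
      _ ≤ D * (⨆ i, F i) x := mul_le_mul_right (le_iSup F (i + 1) x) D

end IsIterableOperator

end RubioDeFrancia

section TransportedMaximal

variable {α : Type*} [MeasurableSpace α] {μ : Measure α} {p q : ℝ} {w σ : α → ℝ≥0∞}

/-- The maximal operator on `Lᵖ(w)`, transported to `L¹` by the substitution `F = w * f ^ p`. -/
def transportedMaximal [PseudoMetricSpace α] (μ : Measure α) (p : ℝ) (w F : α → ℝ≥0∞) (x : α) :
    ℝ≥0∞ :=
  w x * centeredMaximal μ (fun y => (F y / w y) ^ p⁻¹) x ^ p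

theorem MuckenhouptPair.isIterableOperator_transportedMaximal [MetricSpace α] [ProperSpace α]
    [BorelSpace α] [HasBesicovitchCovering α] [μ.IsOpenPosMeasure] [IsFiniteMeasureOnCompacts μ]
    (hμ : IsDoubling μ) (h : MuckenhouptPair μ p q w σ) :
    IsIterableOperator μ (transportedMaximal μ p w) where
  monotone F F' hF x := by
    have hp := h.holderConjugate.pos
    exact mul_le_mul_right (rpow_le_rpow (centeredMaximal_mono μ (fun y =>
      rpow_le_rpow (ENNReal.div_le_div_right (hF y) (w y)) (inv_pos.2 hp).le) x) hp.le) _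
  measurable F hF := h.measurable_left.mul
    ((measurable_centeredMaximal ((hF.div h.measurable_left).pow_const _)).pow_const _)
  map_iSup F hF hmono := by
    have hp := h.holderConjugate.pos
    have hpow {s : ℝ} (hs : 0 < s) (a : ℕ → ℝ≥0∞) : (⨆ i, a i) ^ s = ⨆ i, a i ^ s :=
      (ENNReal.orderIsoRpow s hs).map_iSup a
    have hfun : (fun y => ((⨆ i, F i) y / w y) ^ p⁻¹) = ⨆ i, fun y => (F i y / w y) ^ p⁻¹ := by
      ext y
      simp only [iSup_apply, ENNReal.iSup_div, hpow (inv_pos.2 hp)]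
    ext x
    rw [transportedMaximal, hfun, centeredMaximal_iSup, iSup_apply, hpow hp, ENNReal.mul_iSup,
      iSup_apply]
    · rfl
    · exact fun i => ((hF i).div h.measurable_left).pow_const _
    · exact fun i j hij y =>
        rpow_le_rpow (ENNReal.div_le_div_right (hmono hij y) _) (inv_pos.2 hp).le
  exists_lintegral_le := by
    obtain ⟨C, hC, hbound⟩ := h.exists_lintegral_mul_centeredMaximal_rpow_le hμ
    refine ⟨C, hC, fun F hF =>
      (hbound _ ((hF.div h.measurable_left).pow_const p⁻¹)).trans_eq ?_⟩
    congr 1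
    refine lintegral_congr_ae (h.ae_ne_zero_and_ne_top.mono fun x hx => ?_)
    simp only [← rpow_mul, inv_mul_cancel₀ h.holderConjugate.ne_zero, rpow_one]
    exact ENNReal.mul_div_cancel hx.1 hx.2

end TransportedMaximal

section MuckenhouptA1

/-- The Muckenhoupt class `A_1` on a metric measure space, defined by averages over closed balls. -/
structure MuckenhouptA1 {α : Type*} [PseudoMetricSpace α] [MeasurableSpace α] (μ : Measure α)
    (v : α → ℝ≥0∞) : Prop where
  measurable : Measurable v
  ae_ne_zero_and_ne_top : ∀ᵐ x ∂μ, v x ≠ 0 ∧ v x ≠ ∞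
  exists_setLAverage_le : ∃ C ≠ ∞, ∀ c r, 0 < r →
    ∀ᵐ x ∂μ.restrict (closedBall c r), ⨍⁻ y in closedBall c r, v y ∂μ ≤ C * v x

theorem laverage_mul_rpow_neg_le {α : Type*} [MeasurableSpace α] {μ : Measure α}
    {f v : α → ℝ≥0∞} {C : ℝ≥0∞} {s : ℝ} (hs : 0 ≤ s) (hC : C ≠ ∞) (hf : Measurable f)
    (hv₀ : ⨍⁻ y, v y ∂μ ≠ 0) (hv : ∀ᵐ x ∂μ, ⨍⁻ y, v y ∂μ ≤ C * v x) :
    ⨍⁻ x, f x * v x ^ (-s) ∂μ ≤ (C / ⨍⁻ y, v y ∂μ) ^ s * ⨍⁻ x, f x ∂μ := by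
  have hpointwise : ∀ᵐ x ∂μ, f x * v x ^ (-s) ≤ (C / ⨍⁻ y, v y ∂μ) ^ s * f x := by
    filter_upwards [hv] with x hx
    rw [rpow_neg, ← inv_rpow, mul_comm, ← ENNReal.inv_div (.inl hC) (.inr hv₀)]
    gcongr
    exact ENNReal.div_le_of_le_mul' hx
  calc ⨍⁻ x, f x * v x ^ (-s) ∂μ ≤ ⨍⁻ x, (C / ⨍⁻ y, v y ∂μ) ^ s * f x ∂μ :=
        laverage_mono_ae hpointwise
    _ = (C / ⨍⁻ y, v y ∂μ) ^ s * ⨍⁻ x, f x ∂μ := lintegral_const_mul _ hf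

theorem rpow_ne_zero_and_ne_top {a : ℝ≥0∞} (ha : a ≠ 0 ∧ a ≠ ∞) (s : ℝ) :
    a ^ s ≠ 0 ∧ a ^ s ≠ ∞ :=
  ⟨(rpow_pos (pos_iff_ne_zero.2 ha.1) ha.2).ne', rpow_ne_top_of_ne_zero ha.1 ha.2⟩

theorem rpow_inv_mul_rpow_one_sub_rpow_inv {p q : ℝ} (hpq : p.HolderConjugate q) {a : ℝ≥0∞}
    (ha₀ : a ≠ 0) (ha : a ≠ ∞) : a ^ p⁻¹ * (a ^ (1 - q)) ^ q⁻¹ = 1 := by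
  have hexp : p⁻¹ + (1 - q) * q⁻¹ = 0 := by
    rw [← hpq.symm.one_sub_inv, sub_mul, mul_inv_cancel₀ hpq.symm.ne_zero]
    ring
  rw [← rpow_mul, ← rpow_add _ _ ha₀ ha, hexp, rpow_zero]

theorem div_rpow_inv_mul_div_rpow_inv_rpow {p q : ℝ} (hpq : p.HolderConjugate q) {a b c : ℝ≥0∞}
    (hab : a ^ p⁻¹ * b ^ q⁻¹ = 1) (hc₀ : c ≠ 0) (hc : c ≠ ∞) :
    (c / b) ^ q⁻¹ * ((c / a) ^ p⁻¹) ^ (1 - p) = a := by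
  obtain ⟨ha₀, ha⟩ := ne_zero_and_ne_top_of_rpow_inv_mul_rpow_inv_eq_one hpq hab
  have hq := hpq.symm.inv_pos.le
  have hexp : p⁻¹ * (1 - p) = -q⁻¹ := by
    rw [← hpq.inv_sub_one, mul_sub, mul_one, inv_mul_cancel₀ hpq.ne_zero]
  have hcancel : c / b * (a / c) = a / b := by
    rw [div_eq_mul_inv, div_eq_mul_inv, div_eq_mul_inv]
    calc c * b⁻¹ * (a * c⁻¹) = c * c⁻¹ * (a * b⁻¹) := by ring
      _ = a * b⁻¹ := by rw [ENNReal.mul_inv_cancel hc₀ hc, one_mul]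
  calc (c / b) ^ q⁻¹ * ((c / a) ^ p⁻¹) ^ (1 - p) = (c / b * (a / c)) ^ q⁻¹ := by
        rw [← rpow_mul, hexp, rpow_neg, ← inv_rpow, ENNReal.inv_div (.inl ha) (.inl ha₀),
          mul_rpow_of_nonneg _ _ hq]
    _ = a ^ q⁻¹ * (b ^ q⁻¹)⁻¹ := by
        rw [hcancel, div_eq_mul_inv, mul_rpow_of_nonneg _ _ hq, inv_rpow]
    _ = a := by
        rw [← ENNReal.eq_inv_of_mul_eq_one_left hab, ← rpow_add _ _ ha₀ ha, add_comm,
          hpq.inv_add_inv_eq_one, rpow_one]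

namespace MuckenhouptA1

section PseudoMetricSpace

variable {α : Type*} [PseudoMetricSpace α] [MeasurableSpace α] {μ : Measure α} {p q : ℝ}
  {v v₁ v₂ : α → ℝ≥0∞}

theorem congr_ae (hv : MuckenhouptA1 μ v₁) (hv₂ : Measurable v₂) (h : v₁ =ᵐ[μ] v₂) :
    MuckenhouptA1 μ v₂ where
  measurable := hv₂
  ae_ne_zero_and_ne_top := by
    filter_upwards [hv.ae_ne_zero_and_ne_top, h] with x hx heq
    rwa [← heq]
  exists_setLAverage_le := by
    obtain ⟨C, hC, hbound⟩ := hv.exists_setLAverage_le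
    refine ⟨C, hC, fun c r hr => ?_⟩
    filter_upwards [hbound c r hr, ae_restrict_of_ae h] with x hx heq
    rwa [← laverage_congr (ae_restrict_of_ae h), ← heq]

theorem of_centeredMaximal_le [ProperSpace α] [OpensMeasurableSpace α] [μ.IsOpenPosMeasure]
    [IsFiniteMeasureOnCompacts μ] (hμ : IsDoubling μ) (hv : Measurable v)
    (hv' : ∀ᵐ x ∂μ, v x ≠ 0 ∧ v x ≠ ∞) {C : ℝ≥0∞} (hC : C ≠ ∞)
    (h : ∀ᵐ x ∂μ, centeredMaximal μ v x ≤ C * v x) : MuckenhouptA1 μ v where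
  measurable := hv
  ae_ne_zero_and_ne_top := hv'
  exists_setLAverage_le := by
    obtain ⟨D, hD, hbound⟩ := hμ.exists_setLAverage_closedBall_le_mul_centeredMaximal
    refine ⟨D * C, by finiteness, fun c r hr => ?_⟩
    filter_upwards [ae_restrict_mem measurableSet_closedBall, ae_restrict_of_ae h] with x hx hMx
    rw [mul_assoc]
    exact (hbound v c r hr x hx).trans (mul_le_mul_right hMx D)

variable [ProperSpace α] [μ.IsOpenPosMeasure] [IsFiniteMeasureOnCompacts μ]

theorem setLAverage_closedBall_ne_zero (hv : MuckenhouptA1 μ v) (c : α) {r : ℝ} (hr : 0 < r) :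
    ⨍⁻ x in closedBall c r, v x ∂μ ≠ 0 := by
  rw [setLAverage_eq]
  refine (ENNReal.div_pos ?_ measure_closedBall_lt_top.ne).ne'
  exact setLIntegral_ne_zero_of_ae_ne_zero hv.measurable
    (hv.ae_ne_zero_and_ne_top.mono fun _ hx => hx.1) (measure_closedBall_pos μ c hr).ne'

theorem setLIntegral_closedBall_ne_top (hv : MuckenhouptA1 μ v) (c : α) {r : ℝ} (hr : 0 < r) :
    ∫⁻ x in closedBall c r, v x ∂μ ≠ ∞ := by
  obtain ⟨C, hC, hbound⟩ := hv.exists_setLAverage_le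
  have hpos := (measure_closedBall_pos μ c hr).ne'
  have : (ae (μ.restrict (closedBall c r))).NeBot :=
    ae_neBot.2 (mt Measure.restrict_eq_zero.1 hpos)
  obtain ⟨x, hx, hx'⟩ :=
    ((hbound c r hr).and (ae_restrict_of_ae hv.ae_ne_zero_and_ne_top)).exists
  rw [← measure_mul_setLAverage _ measure_closedBall_lt_top.ne]
  exact ENNReal.mul_ne_top measure_closedBall_lt_top.ne
    (ne_top_of_le_ne_top (ENNReal.mul_ne_top hC hx'.2) hx)

theorem exists_setLAverage_mul_rpow_rpow_inv_le (hpq : p.HolderConjugate q)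
    (h₁ : Measurable v₁) (h₂ : MuckenhouptA1 μ v₂) :
    ∃ C ≠ ∞, ∀ c r, 0 < r → (⨍⁻ x in closedBall c r, v₁ x * v₂ x ^ (1 - p) ∂μ) ^ p⁻¹ ≤
      (C / ⨍⁻ x in closedBall c r, v₂ x ∂μ) ^ q⁻¹ * (⨍⁻ x in closedBall c r, v₁ x ∂μ) ^ p⁻¹ := by
  obtain ⟨C, hC, hbound⟩ := h₂.exists_setLAverage_le
  have hp := hpq.inv_pos.le
  have hexp : (p - 1) * p⁻¹ = q⁻¹ := by
    rw [sub_mul, one_mul, mul_inv_cancel₀ hpq.ne_zero, hpq.one_sub_inv]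
  refine ⟨C, hC, fun c r hr => ?_⟩
  rw [← hexp, rpow_mul, ← mul_rpow_of_nonneg _ _ hp, ← neg_sub p 1]
  exact rpow_le_rpow (laverage_mul_rpow_neg_le hpq.sub_one_pos.le hC h₁
    (h₂.setLAverage_closedBall_ne_zero c hr) (hbound c r hr)) hp

theorem muckenhouptPair (hpq : p.HolderConjugate q) (h₁ : MuckenhouptA1 μ v₁)
    (h₂ : MuckenhouptA1 μ v₂) :
    MuckenhouptPair μ p q (fun x => v₁ x * v₂ x ^ (1 - p))
      (fun x => (v₁ x * v₂ x ^ (1 - p)) ^ (1 - q)) where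
  holderConjugate := hpq
  measurable_left := h₁.measurable.mul (h₂.measurable.pow_const _)
  measurable_right := (h₁.measurable.mul (h₂.measurable.pow_const _)).pow_const _
  rpow_inv_mul_rpow_inv := by
    filter_upwards [h₁.ae_ne_zero_and_ne_top, h₂.ae_ne_zero_and_ne_top] with x hx₁ hx₂
    have hpow := rpow_ne_zero_and_ne_top hx₂ (1 - p)
    exact rpow_inv_mul_rpow_one_sub_rpow_inv hpq (mul_ne_zero hx₁.1 hpow.1)
      (ENNReal.mul_ne_top hx₁.2 hpow.2)
  exists_setLAverage_le := by
    obtain ⟨C₁, hC₁, hbound₁⟩ := exists_setLAverage_mul_rpow_rpow_inv_le hpq.symm h₂.measurable h₁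
    obtain ⟨C₂, hC₂, hbound₂⟩ := exists_setLAverage_mul_rpow_rpow_inv_le hpq h₁.measurable h₂
    have hp := hpq.inv_pos.le
    have hq := hpq.symm.inv_pos.le
    have hdual : (fun x => (v₁ x * v₂ x ^ (1 - p)) ^ (1 - q)) =ᵐ[μ]
        fun x => v₂ x * v₁ x ^ (1 - q) := by
      filter_upwards [h₁.ae_ne_zero_and_ne_top, h₂.ae_ne_zero_and_ne_top] with x hx₁ hx₂
      have hexp : (1 - p) * (1 - q) = 1 := by linear_combination hpq.mul_eq_add
      rw [ENNReal.mul_rpow_of_ne_top hx₁.2 (rpow_ne_top_of_ne_zero hx₂.1 hx₂.2), ← rpow_mul, hexp,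
        rpow_one, mul_comm]
    refine ⟨C₂ ^ q⁻¹ * C₁ ^ p⁻¹, by finiteness, fun c r hr => ?_⟩
    rw [laverage_congr (ae_restrict_of_ae hdual)]
    set A₁ := ⨍⁻ x in closedBall c r, v₁ x ∂μ
    set A₂ := ⨍⁻ x in closedBall c r, v₂ x ∂μ
    calc (⨍⁻ x in closedBall c r, v₁ x * v₂ x ^ (1 - p) ∂μ) ^ p⁻¹ *
          (⨍⁻ x in closedBall c r, v₂ x * v₁ x ^ (1 - q) ∂μ) ^ q⁻¹
        ≤ (C₂ / A₂) ^ q⁻¹ * A₁ ^ p⁻¹ * ((C₁ / A₁) ^ p⁻¹ * A₂ ^ q⁻¹) :=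
          mul_le_mul' (hbound₂ c r hr) (hbound₁ c r hr)
      _ = (C₂ / A₂ * A₂) ^ q⁻¹ * (C₁ / A₁ * A₁) ^ p⁻¹ := by
          rw [mul_rpow_of_nonneg _ _ hp, mul_rpow_of_nonneg _ _ hq]
          ring
      _ ≤ C₂ ^ q⁻¹ * C₁ ^ p⁻¹ := by
          gcongr <;> exact (mul_comm _ _).trans_le ENNReal.mul_div_le

end PseudoMetricSpace

end MuckenhouptA1

end MuckenhouptA1

section Factorization

variable {α : Type*} [MeasurableSpace α] {μ : Measure α} {p q : ℝ} {w σ F : α → ℝ≥0∞}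

theorem MuckenhouptPair.muckenhouptA1_div_rpow_inv [PseudoMetricSpace α] [ProperSpace α]
    [OpensMeasurableSpace α] [μ.IsOpenPosMeasure] [IsFiniteMeasureOnCompacts μ] (hμ : IsDoubling μ)
    (h : MuckenhouptPair μ p q w σ) (hF : Measurable F) (hF' : ∀ᵐ x ∂μ, F x ≠ 0 ∧ F x ≠ ∞)
    {D : ℝ≥0∞} (hD : D ≠ ∞) (hle : transportedMaximal μ p w F ≤ D • F) :
    MuckenhouptA1 μ fun x => (F x / w x) ^ p⁻¹ := by
  have hp := h.holderConjugate.inv_pos.le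
  refine .of_centeredMaximal_le hμ ((hF.div h.measurable_left).pow_const _) ?_
    (C := D ^ p⁻¹) (by finiteness) ?_
  · filter_upwards [h.ae_ne_zero_and_ne_top, hF'] with x hx hFx
    exact rpow_ne_zero_and_ne_top
      ⟨(ENNReal.div_pos hFx.1 hx.2).ne', (ENNReal.div_lt_top hFx.2 hx.1).ne⟩ _
  · filter_upwards [h.ae_ne_zero_and_ne_top] with x hx
    rw [← mul_rpow_of_nonneg _ _ hp, ENNReal.le_rpow_inv_iff h.holderConjugate.pos,
      ← mul_div_assoc, ENNReal.le_div_iff_mul_le (.inl hx.1) (.inl hx.2), mul_comm]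
    exact hle x

theorem exists_muckenhouptA1_of_ae_eq [PseudoMetricSpace α] (hw : Measurable w)
    {u₁ u₂ : α → ℝ≥0∞} (h₁ : MuckenhouptA1 μ u₁) (h₂ : MuckenhouptA1 μ u₂)
    (h : ∀ᵐ x ∂μ, w x = u₁ x * u₂ x ^ (1 - p)) :
    ∃ w₁ w₂, MuckenhouptA1 μ w₁ ∧ MuckenhouptA1 μ w₂ ∧ ∀ x, w x = w₁ x * w₂ x ^ (1 - p) := by
  let s := {x | w x = u₁ x * u₂ x ^ (1 - p)}
  have hs : MeasurableSet s :=
    measurableSet_eq_fun hw (h₁.measurable.mul (h₂.measurable.pow_const _))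
  refine ⟨s.piecewise u₁ w, s.piecewise u₂ 1, h₁.congr_ae (h₁.measurable.piecewise hs hw) ?_,
    h₂.congr_ae (h₂.measurable.piecewise hs measurable_one) ?_, fun x => ?_⟩
  · exact h.mono fun x hx => (piecewise_eq_of_mem s u₁ w hx).symm
  · exact h.mono fun x hx => (piecewise_eq_of_mem s u₂ 1 hx).symm
  · by_cases hx : x ∈ s
    · rw [piecewise_eq_of_mem _ _ _ hx, piecewise_eq_of_mem _ _ _ hx]
      exact hx
    · simp [hx]

variable [MetricSpace α] [ProperSpace α] [BorelSpace α] [HasBesicovitchCovering α]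
  [μ.IsOpenPosMeasure] [IsFiniteMeasureOnCompacts μ]

theorem MuckenhouptPair.exists_eq_mul_rpow (hμ : IsDoubling μ) (h : MuckenhouptPair μ p q w σ) :
    ∃ w₁ w₂, MuckenhouptA1 μ w₁ ∧ MuckenhouptA1 μ w₂ ∧ ∀ x, w x = w₁ x * w₂ x ^ (1 - p) := by
  obtain ⟨D, hD, hiterate⟩ := ((h.isIterableOperator_transportedMaximal hμ).add
    (h.symm.isIterableOperator_transportedMaximal hμ)).exists_forall_exists_le_and_apply_le_smul
  obtain ⟨g, hg_pos, hg, hg_int⟩ := exists_pos_lintegral_lt_of_sigmaFinite μ one_ne_zero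
  obtain ⟨F, hF, hgF, hF_int, hTF⟩ := hiterate (fun x => g x) hg.coe_nnreal_ennreal
  have hF' : ∀ᵐ x ∂μ, F x ≠ 0 ∧ F x ≠ ∞ := by
    have hfin : ∫⁻ x, F x ∂μ ≠ ∞ := ne_top_of_le_ne_top (by finiteness) hF_int
    filter_upwards [ae_lt_top hF hfin] with x hx
    exact ⟨((coe_pos.2 (hg_pos x)).trans_le (hgF x)).ne', hx.ne⟩
  refine exists_muckenhouptA1_of_ae_eq h.measurable_left
    (h.symm.muckenhouptA1_div_rpow_inv hμ hF hF' hD fun x => le_add_self.trans (hTF x))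
    (h.muckenhouptA1_div_rpow_inv hμ hF hF' hD fun x => le_self_add.trans (hTF x)) ?_
  filter_upwards [h.rpow_inv_mul_rpow_inv, hF'] with x hx hFx
  exact (div_rpow_inv_mul_div_rpow_inv_rpow h.holderConjugate hx hFx.1 hFx.2).symm

theorem statement10_general (hμ : IsDoubling μ) (hpq : p.HolderConjugate q) :
    MuckenhouptPair μ p q w (fun x => w x ^ (1 - q)) ↔
      ∃ w₁ w₂, MuckenhouptA1 μ w₁ ∧ MuckenhouptA1 μ w₂ ∧ ∀ x, w x = w₁ x * w₂ x ^ (1 - p) := by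
  refine ⟨fun h => h.exists_eq_mul_rpow hμ, ?_⟩
  rintro ⟨w₁, w₂, h₁, h₂, heq⟩
  obtain rfl : w = fun x => w₁ x * w₂ x ^ (1 - p) := funext heq
  exact h₁.muckenhouptPair hpq h₂

end Factorization

section Cubes

theorem setOf_cube_ae_eq_closedBall (a : Fin n → ℝ) {l : ℝ} (hl : 0 < l) :
    {x | ∀ i, a i ≤ x i ∧ x i < a i + l} =ᵐ[volume] closedBall (fun i => a i + l / 2) (l / 2) := by
  have hcube : {x | ∀ i, a i ≤ x i ∧ x i < a i + l} = pi univ fun i => Ico (a i) (a i + l) := by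
    ext x
    simp only [mem_ofPred_eq, mem_univ_pi, mem_Ico]
  have hball : closedBall (fun i => a i + l / 2) (l / 2) = Icc a fun i => a i + l := by
    rw [closedBall_pi _ (by positivity), ← pi_univ_Icc]
    simp only [Real.closedBall_eq_Icc, add_sub_cancel_right, add_assoc, add_halves]
  rw [hcube, hball]
  exact Measure.univ_pi_Ico_ae_eq_Icc

theorem forall_isCube_iff {P : Measure (Fin n → ℝ) → Prop} :
    (∀ Q, IsCube Q → P (volume.restrict Q)) ↔
      ∀ c r, 0 < r → P (volume.restrict (closedBall c r)) := by
  refine ⟨fun h c r hr => ?_, ?_⟩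
  · have hcube := setOf_cube_ae_eq_closedBall (fun i => c i - r) (mul_pos two_pos hr)
    simp only [mul_div_cancel_left₀ r two_ne_zero, sub_add_cancel] at hcube
    rw [← Measure.restrict_congr_set hcube]
    exact h _ ⟨_, _, mul_pos two_pos hr, rfl⟩
  · rintro h _ ⟨a, l, hl, rfl⟩
    rw [Measure.restrict_congr_set (setOf_cube_ae_eq_closedBall a hl)]
    exact h _ _ (half_pos hl)

theorem iSup_isCube_lt_top_iff {Φ : Measure (Fin n → ℝ) → ℝ≥0∞} :
    (⨆ (Q) (_ : IsCube Q), Φ (volume.restrict Q)) < ∞ ↔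
      ∃ K ≠ ∞, ∀ c r, 0 < r → Φ (volume.restrict (closedBall c r)) ≤ K := by
  have hiff (K : ℝ≥0∞) := forall_isCube_iff (P := fun ν => Φ ν ≤ K)
  refine ⟨fun h => ⟨_, h.ne, (hiff _).1 fun Q hQ => ?_⟩,
    fun ⟨K, hK, h⟩ => (iSup₂_le ((hiff K).2 h)).trans_lt hK.lt_top⟩
  exact le_iSup₂ (f := fun Q (_ : IsCube Q) => Φ (volume.restrict Q)) Q hQ

theorem eavg_eq_laverage (Q : Set (Fin n → ℝ)) (f : (Fin n → ℝ) → ℝ≥0∞) :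
    eavg Q f = ⨍⁻ x, f x ∂volume.restrict Q :=
  (setLAverage_eq volume f Q).symm

theorem memAp_iff_muckenhouptPair {p : ℝ} (hp : 1 < p) {w : (Fin n → ℝ) → ℝ≥0∞}
    (hw : IsWeight w) :
    MemAp p w ↔ MuckenhouptPair volume p (p / (p - 1)) w fun x => w x ^ (1 - p / (p - 1)) := by
  have hpq : p.HolderConjugate (p / (p - 1)) := .conjExponent hp
  have hroot (A B : ℝ≥0∞) : A ^ p⁻¹ * B ^ (p / (p - 1))⁻¹ = (A * B ^ (p - 1)) ^ p⁻¹ := by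
    rw [mul_rpow_of_nonneg _ _ hpq.inv_pos.le, ← rpow_mul, ← hpq.one_sub_inv, sub_mul,
      mul_inv_cancel₀ hpq.ne_zero, one_mul]
  rw [MemAp, ApConst, if_neg hp.ne']
  simp only [eavg_eq_laverage]
  rw [iSup_isCube_lt_top_iff (Φ := fun ν =>
    (⨍⁻ x, w x ∂ν) * (⨍⁻ x, w x ^ (1 - p / (p - 1)) ∂ν) ^ (p - 1))]
  refine ⟨fun ⟨K, hK, hbound⟩ => ?_, fun h => ?_⟩
  · refine ⟨hpq, hw.1, hw.1.pow_const _, ?_, K ^ p⁻¹, by have := hpq.inv_pos.le; finiteness,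
      fun c r hr => ?_⟩
    · exact hw.2.1.mono fun x hx => rpow_inv_mul_rpow_one_sub_rpow_inv hpq hx.1.ne' hx.2.ne
    · rw [hroot]
      exact rpow_le_rpow (hbound c r hr) hpq.inv_pos.le
  · obtain ⟨K, hK, hbound⟩ := h.exists_setLAverage_le
    refine ⟨K ^ p, by have := hpq.pos.le; finiteness, fun c r hr => ?_⟩
    rw [← ENNReal.rpow_inv_le_iff hpq.pos, ← hroot]
    exact hbound c r hr

theorem essSup_div_le_iff {α : Type*} [MeasurableSpace α] {ν : Measure α} {v : α → ℝ≥0∞}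
    (hv : ∀ᵐ x ∂ν, v x ≠ 0 ∧ v x ≠ ∞) (a K : ℝ≥0∞) :
    essSup (fun x => a / v x) ν ≤ K ↔ ∀ᵐ x ∂ν, a ≤ K * v x := by
  refine ⟨fun h => ?_, fun h => essSup_le_of_ae_le K ?_⟩
  · filter_upwards [hv, ENNReal.ae_le_essSup fun x => a / v x] with x hx hle
    exact (ENNReal.div_le_iff hx.1 hx.2).1 (hle.trans h)
  · filter_upwards [hv, h] with x hx hle
    exact (ENNReal.div_le_iff hx.1 hx.2).2 hle

theorem isWeight_and_memAp_one_iff {v : (Fin n → ℝ) → ℝ≥0∞} :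
    IsWeight v ∧ MemAp 1 v ↔ MuckenhouptA1 volume v := by
  have hMemAp : MemAp 1 v ↔ ∃ K ≠ ∞, ∀ c r, 0 < r →
      essSup (fun x => (⨍⁻ y in closedBall c r, v y ∂volume) / v x)
        (volume.restrict (closedBall c r)) ≤ K := by
    rw [MemAp, ApConst, if_pos rfl]
    simp only [eavg_eq_laverage]
    exact iSup_isCube_lt_top_iff (Φ := fun ν => essSup (fun x => (⨍⁻ y, v y ∂ν) / v x) ν)
  constructor
  · rintro ⟨⟨hv, hv', -⟩, hA⟩
    have hv' : ∀ᵐ x, v x ≠ 0 ∧ v x ≠ ∞ := hv'.mono fun x hx => ⟨hx.1.ne', hx.2.ne⟩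
    exact ⟨hv, hv', by simpa only [hMemAp, essSup_div_le_iff (ae_restrict_of_ae hv')] using hA⟩
  · intro h
    refine ⟨⟨h.measurable, ?_, ?_⟩, ?_⟩
    · exact h.ae_ne_zero_and_ne_top.mono fun x hx => ⟨pos_iff_ne_zero.2 hx.1, hx.2.lt_top⟩
    · rw [forall_isCube_iff (P := fun ν => ∫⁻ x, v x ∂ν < ∞)]
      exact fun c r hr => (h.setLIntegral_closedBall_ne_top c hr).lt_top
    · simpa only [hMemAp,
        essSup_div_le_iff (ae_restrict_of_ae h.ae_ne_zero_and_ne_top)] using h.exists_setLAverage_le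

end Cubes

/-- Jones factorization: for `1 < p < ∞`, a weight `w ∈ A_p` iff
there exist `w₁, w₂ ∈ A_1` with `w = w₁ w₂^{1-p}`. -/
theorem statement10 (n : ℕ) (p : ℝ) (hp : 1 < p)
    (w : (Fin n → ℝ) → ℝ≥0∞) (hw : IsWeight w) :
    MemAp p w ↔
      ∃ w₁ w₂ : (Fin n → ℝ) → ℝ≥0∞, IsWeight w₁ ∧ IsWeight w₂ ∧
        MemAp 1 w₁ ∧ MemAp 1 w₂ ∧ ∀ x, w x = w₁ x * w₂ x ^ (1 - p) := by
  rw [memAp_iff_muckenhouptPair hp hw,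
    statement10_general (q := p / (p - 1))
      (isDoubling_of_isAddHaarMeasure volume) (.conjExponent hp)]
  simp only [← isWeight_and_memAp_one_iff, and_assoc, and_left_comm]
end
end
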